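/- Let V : ℝⁿ → ℝ be C² with e^{-V} integrable and μ the probability measure with density proportional to e^{-V}. Let ρ : ℝⁿ → ℝ be continuous with ⟨u, Hess V(x) u⟩ ≥ ρ(x)‖u‖² for all x, u, ρ ≥ ρ₀ for some ρ₀ ∈ ℝ, and m := ∫ρ dμ > 0. Let c : ℝⁿ×ℝⁿ → [0,∞] be a lower semicontinuous symmetric cost with c(x,x)=0, and suppose L := ‖ρ‖_c = sup_{x≠y}|ρ(x)−ρ(y)|/c(x,y) < ∞. Let α : [0,∞) → [0,∞) be continuous, increasing, with α(0)=0, and suppose the transport-information inequality α(T_c(ν,μ)) ≤ I(ν|μ) holds for every probability measure ν = f·μ with f positive and C¹. If m > α*(2L)/2, then for every smooth compactly supported g, Var_μ(g) ≤ (1/(m − α*(2L)/2)) ∫‖∇g‖² dμ. -/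

import Mathlib

open MeasureTheory Real Set
open scoped ENNReal RealInnerProductSpace

/-- The transportation cost `T_c(ν,μ)`: infimum of `∫ c dπ` over couplings `π` of `ν` and `μ`. -/
noncomputable def transportCost {E : Type*} [MeasurableSpace E]
    (c : E → E → ℝ≥0∞) (ν μ : MeasureTheory.Measure E) : ℝ≥0∞ :=
  ⨅ cpl ∈ {cpl : MeasureTheory.Measure (E × E) |
      cpl.map Prod.fst = ν ∧ cpl.map Prod.snd = μ ∧ MeasureTheory.IsProbabilityMeasure cpl},
    ∫⁻ p, c p.1 p.2 ∂cpl

/-- The norm `‖ρ‖_c = sup_{x ≠ y} |ρ(x) - ρ(y)| / c(x,y)` (the diagonal contributes `0/0 = 0`). -/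
noncomputable def costLipNorm {E : Type*} (c : E → E → ℝ≥0∞) (ρ : E → ℝ) : ℝ≥0∞ :=
  ⨆ x, ⨆ y, ENNReal.ofReal |ρ x - ρ y| / c x y

/-!
Write `Lφ = Δφ - ⟨∇V, ∇φ⟩` and let `φ` be a test function. By Bochner's formula and the bound on the
Hessian of `V`, `∫ (Lφ)² dμ ≥ ∫ ‖Hess φ‖² dμ + ∫ ρ ‖∇φ‖² dμ`. After normalisation `‖∇φ‖²` is a
probability density `f` with respect to `μ`, and `∫ ρ f dμ` differs from `m` by at most
`‖ρ‖_c T_c(f·μ, μ) ≤ α*(‖ρ‖_c) + I(f·μ|μ)`, while `I(f·μ|μ) ∫ ‖∇φ‖² dμ ≤ ∫ ‖Hess φ‖² dμ`. Hence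
`κ ∫ ‖∇φ‖² dμ ≤ ∫ (Lφ)² dμ` for `κ = m - α*(‖ρ‖_c)`, and `α*(‖ρ‖_c) ≤ α*(2 ‖ρ‖_c) / 2`.

By duality this is the Poincaré inequality with constant `1/κ`, provided that `L(C_c^∞)` is dense in
the mean-zero functions of `L²(μ)`, i.e. that every weak solution `u ∈ L²(μ)` of `L u = 0` is
constant. For this, Caccioppoli's inequality is applied to the mollifications
`e^V (η ⋆ (e^{-V} u))`: these solve the equation up to a commutator that vanishes locally uniformly
with the width of `η`, so their gradients tend to `0` as the cutoff exhausts the space.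
-/

open Filter Function InnerProductSpace
open scoped Topology ContDiff Gradient Laplacian Convolution ProbabilityTheory

/-! ### Gradients and the generator -/

theorem integrable_norm_sq_of_hasCompactSupport {X F : Type*} [TopologicalSpace X]
    [MeasurableSpace X] [OpensMeasurableSpace X] [NormedAddCommGroup F] {μ : Measure X}
    [IsFiniteMeasureOnCompacts μ] {f : X → F} (hf : Continuous f) (hfc : HasCompactSupport f) :
    Integrable (fun x => ‖f x‖ ^ 2) μ :=
  (hf.norm.pow 2).integrable_of_hasCompactSupport (hfc.mono fun x hx hfx => hx (by simp [hfx]))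

variable {E : Type*} [NormedAddCommGroup E] [InnerProductSpace ℝ E] [FiniteDimensional ℝ E]

/-- The directional derivative of `f` along the `i`-th vector of the standard orthonormal basis,
written `∂[i] f`. -/
noncomputable def partialDeriv (i : Fin (Module.finrank ℝ E)) (f : E → ℝ) (x : E) : ℝ :=
  fderiv ℝ f x (stdOrthonormalBasis ℝ E i)

local notation "∂[" i "]" => partialDeriv i

theorem inner_stdOrthonormalBasis_gradient (f : E → ℝ) (i : Fin (Module.finrank ℝ E)) (x : E) :
    ⟪stdOrthonormalBasis ℝ E i, ∇ f x⟫ = ∂[i] f x :=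
  inner_gradient_right

theorem inner_gradient_gradient (f g : E → ℝ) (x : E) :
    ⟪∇ f x, ∇ g x⟫ = ∑ i, ∂[i] f x * ∂[i] g x := by
  rw [← (stdOrthonormalBasis ℝ E).sum_inner_mul_inner]
  simp only [inner_gradient_left, inner_stdOrthonormalBasis_gradient, partialDeriv]

theorem norm_gradient_sq (f : E → ℝ) (x : E) : ‖∇ f x‖ ^ 2 = ∑ i, ∂[i] f x ^ 2 := by
  rw [← real_inner_self_eq_norm_sq, inner_gradient_gradient]
  simp only [sq]

theorem sum_partialDeriv_smul (f : E → ℝ) (x : E) :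
    ∑ i, ∂[i] f x • stdOrthonormalBasis ℝ E i = ∇ f x := by
  simp only [← inner_stdOrthonormalBasis_gradient, ← OrthonormalBasis.repr_apply_apply,
    OrthonormalBasis.sum_repr]

theorem norm_gradient_eq_norm_fderiv (f : E → ℝ) (x : E) : ‖∇ f x‖ = ‖fderiv ℝ f x‖ :=
  (toDual ℝ E).symm.norm_map _

theorem contDiff_partialDeriv {f : E → ℝ} {k l : WithTop ℕ∞} (i : Fin (Module.finrank ℝ E))
    (hf : ContDiff ℝ l f) (hkl : k + 1 ≤ l) : ContDiff ℝ k (∂[i] f) :=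
  (hf.fderiv_right hkl).clm_apply contDiff_const

theorem continuous_partialDeriv {f : E → ℝ} (i : Fin (Module.finrank ℝ E))
    (hf : ContDiff ℝ 1 f) : Continuous (∂[i] f) :=
  (contDiff_partialDeriv (k := 0) i hf le_rfl).continuous

theorem continuous_gradient {f : E → ℝ} (hf : ContDiff ℝ 1 f) : Continuous (∇ f) :=
  (toDual ℝ E).symm.continuous.comp (hf.continuous_fderiv one_ne_zero)

theorem hasCompactSupport_partialDeriv {f : E → ℝ} (i : Fin (Module.finrank ℝ E))
    (hf : HasCompactSupport f) : HasCompactSupport (∂[i] f) :=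
  hf.fderiv_apply ℝ _

theorem hasCompactSupport_gradient {f : E → ℝ} (hf : HasCompactSupport f) :
    HasCompactSupport (∇ f) :=
  (hf.fderiv ℝ).comp_left (map_zero _)

theorem gradient_mul {f g : E → ℝ} {x : E} (hf : DifferentiableAt ℝ f x)
    (hg : DifferentiableAt ℝ g x) :
    ∇ (fun y => f y * g y) x = f x • ∇ g x + g x • ∇ f x := by
  simp only [gradient, fderiv_fun_mul hf hg, map_add, map_smul]

theorem partialDeriv_mul {f g : E → ℝ} {x : E} (i : Fin (Module.finrank ℝ E))
    (hf : DifferentiableAt ℝ f x) (hg : DifferentiableAt ℝ g x) :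
    ∂[i] (fun y => f y * g y) x = ∂[i] f x * g x + f x * ∂[i] g x := by
  simp only [partialDeriv, fderiv_fun_mul hf hg, add_apply,
    smul_apply, smul_eq_mul]
  ring

theorem partialDeriv_comp_sub {η : E → ℝ} (i : Fin (Module.finrank ℝ E)) (hη : Differentiable ℝ η)
    (x : E) : ∂[i] (fun y => η (x - y)) = fun y => -∂[i] η (x - y) := by
  ext y
  have h := (hη (x - y)).hasFDerivAt.comp y ((hasFDerivAt_id y).const_sub x)
  rw [partialDeriv, partialDeriv, HasFDerivAt.fderiv (f := fun y => η (x - y)) h]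
  simp

theorem partialDeriv_partialDeriv_comp_sub {η : E → ℝ} (i : Fin (Module.finrank ℝ E))
    (hη : ContDiff ℝ 2 η) (x y : E) :
    ∂[i] (∂[i] fun z => η (x - z)) y = ∂[i] (∂[i] η) (x - y) := by
  have hη' : Differentiable ℝ (∂[i] η) :=
    (contDiff_partialDeriv (k := 1) i hη le_rfl).differentiable one_ne_zero
  rw [partialDeriv_comp_sub i (hη.differentiable two_ne_zero), partialDeriv, fderiv_fun_neg]
  change -∂[i] (fun z => ∂[i] η (x - z)) y = _
  rw [partialDeriv_comp_sub i hη', neg_neg]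

theorem partialDeriv_comm {f : E → ℝ} (i j : Fin (Module.finrank ℝ E)) (hf : ContDiff ℝ 2 f) :
    ∂[i] (∂[j] f) = ∂[j] (∂[i] f) := by
  ext x
  have hf' : DifferentiableAt ℝ (fderiv ℝ f) x :=
    (hf.fderiv_right (m := 1) le_rfl).differentiable one_ne_zero x
  have hsymm : IsSymmSndFDerivAt ℝ f x := hf.contDiffAt.isSymmSndFDerivAt (by simp)
  change fderiv ℝ (fun y => fderiv ℝ f y _) x _ = fderiv ℝ (fun y => fderiv ℝ f y _) x _
  simpa [fderiv_clm_apply hf'] using hsymm.eq _ _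

theorem iteratedFDeriv_two_basis_gradient {V φ : E → ℝ} (i : Fin (Module.finrank ℝ E))
    (hV : ContDiff ℝ 2 V) (x : E) :
    iteratedFDeriv ℝ 2 V x ![stdOrthonormalBasis ℝ E i, ∇ φ x] =
      ∑ j, ∂[i] (∂[j] V) x * ∂[j] φ x := by
  have hV' : DifferentiableAt ℝ (fderiv ℝ V) x :=
    (hV.fderiv_right (m := 1) le_rfl).differentiable one_ne_zero x
  simp only [iteratedFDeriv_two_apply, Matrix.cons_val_zero, Matrix.cons_val_one,
    ← sum_partialDeriv_smul φ, map_sum, map_smul, smul_eq_mul]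
  refine Finset.sum_congr rfl fun j _ => ?_
  change _ = fderiv ℝ (fun y => fderiv ℝ V y _) x _ * _
  simp [fderiv_clm_apply hV', mul_comm]

theorem iteratedFDeriv_two_gradient_gradient {V φ : E → ℝ} (x : E) :
    ∑ i, ∂[i] φ x * iteratedFDeriv ℝ 2 V x ![stdOrthonormalBasis ℝ E i, ∇ φ x] =
      iteratedFDeriv ℝ 2 V x ![∇ φ x, ∇ φ x] := by
  simp only [iteratedFDeriv_two_apply, Matrix.cons_val_zero, Matrix.cons_val_one]
  conv_rhs => enter [1]; rw [← sum_partialDeriv_smul φ x]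
  simp

theorem laplacian_eq_sum_partialDeriv {f : E → ℝ} (hf : ContDiff ℝ 2 f) (x : E) :
    Δ f x = ∑ i, ∂[i] (∂[i] f) x := by
  have hf' : DifferentiableAt ℝ (fderiv ℝ f) x :=
    (hf.fderiv_right (m := 1) le_rfl).differentiable one_ne_zero x
  rw [laplacian_eq_iteratedFDeriv_stdOrthonormalBasis]
  refine Finset.sum_congr rfl fun i _ => ?_
  change _ = fderiv ℝ (fun y => fderiv ℝ f y _) x _
  simp [fderiv_clm_apply hf', iteratedFDeriv_two_apply]

theorem integral_mul_partialDeriv [MeasurableSpace E] [BorelSpace E] {f g : E → ℝ}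
    (i : Fin (Module.finrank ℝ E)) (hf : ContDiff ℝ 1 f) (hg : ContDiff ℝ 1 g)
    (hgc : HasCompactSupport g) : ∫ x, f x * ∂[i] g x = -∫ x, ∂[i] f x * g x := by
  have hf' := continuous_partialDeriv i hf
  have hg' := continuous_partialDeriv i hg
  exact integral_mul_fderiv_eq_neg_fderiv_mul_of_integrable
    ((hf'.mul hg.continuous).integrable_of_hasCompactSupport hgc.mul_left)
    ((hf.continuous.mul hg').integrable_of_hasCompactSupport
      (hasCompactSupport_partialDeriv i hgc).mul_left)
    ((hf.continuous.mul hg.continuous).integrable_of_hasCompactSupport hgc.mul_left)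
    (fun x _ => hf.differentiable one_ne_zero x) (fun x _ => hg.differentiable one_ne_zero x)

theorem integrable_norm_gradient_sq [MeasurableSpace E] [BorelSpace E] {f : E → ℝ}
    (μ : Measure E) [IsFiniteMeasureOnCompacts μ] (hf : ContDiff ℝ 1 f)
    (hfc : HasCompactSupport f) :
    Integrable (fun x => ‖∇ f x‖ ^ 2) μ :=
  integrable_norm_sq_of_hasCompactSupport (continuous_gradient hf) (hasCompactSupport_gradient hfc)

theorem integrable_iteratedFDeriv_two_gradient [MeasurableSpace E] [BorelSpace E]
    {V φ : E → ℝ} (μ : Measure E) [IsFiniteMeasureOnCompacts μ] (hV : ContDiff ℝ 2 V)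
    (hφ : ContDiff ℝ 1 φ) (hφc : HasCompactSupport φ) :
    Integrable (fun x => iteratedFDeriv ℝ 2 V x ![∇ φ x, ∇ φ x]) μ := by
  simp only [iteratedFDeriv_two_apply, Matrix.cons_val_zero, Matrix.cons_val_one]
  have hV'' : Continuous (fderiv ℝ (fderiv ℝ V)) :=
    (hV.fderiv_right (m := 1) le_rfl).continuous_fderiv one_ne_zero
  have hφ' := continuous_gradient hφ
  exact ((hV''.clm_apply hφ').clm_apply hφ').integrable_of_hasCompactSupport <|
    (hasCompactSupport_gradient hφc).mono fun x hx hφx => hx (by simp [hφx])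

theorem norm_gradient_sqrt_sq {f : E → ℝ} {x : E} (hf : DifferentiableAt ℝ f x) (hfx : 0 < f x) :
    ‖∇ (fun y => √(f y)) x‖ ^ 2 = ‖∇ f x‖ ^ 2 / (4 * f x) := by
  simp only [gradient, LinearIsometryEquiv.norm_map, fderiv_sqrt hf hfx.ne', norm_smul,
    mul_pow, norm_div, div_pow, norm_one, norm_mul, Real.norm_eq_abs, sq_abs, Real.sq_sqrt hfx.le]
  ring

theorem norm_gradient_sum_sq_sq_le {ι : Type*} [Fintype ι] {a : ι → E → ℝ} {x : E}
    (ha : ∀ i, DifferentiableAt ℝ (a i) x) :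
    ‖∇ (fun y => ∑ i, a i y ^ 2) x‖ ^ 2 ≤ 4 * (∑ i, a i x ^ 2) * ∑ i, ‖∇ (a i) x‖ ^ 2 := by
  have hle : ‖∇ (fun y => ∑ i, a i y ^ 2) x‖ ≤ ∑ i, 2 * |a i x| * ‖∇ (a i) x‖ := by
    rw [norm_gradient_eq_norm_fderiv, fderiv_fun_sum fun i _ => (ha i).fun_pow 2]
    refine (norm_sum_le _ _).trans (Finset.sum_le_sum fun i _ => ?_)
    simp [fderiv_fun_pow 2 (ha i), norm_smul, norm_gradient_eq_norm_fderiv]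
  calc ‖∇ (fun y => ∑ i, a i y ^ 2) x‖ ^ 2
      ≤ (∑ i, 2 * |a i x| * ‖∇ (a i) x‖) ^ 2 := by gcongr
    _ ≤ (∑ i, (2 * |a i x|) ^ 2) * ∑ i, ‖∇ (a i) x‖ ^ 2 := Finset.sum_mul_sq_le_sq_mul_sq _ _ _
    _ = 4 * (∑ i, a i x ^ 2) * ∑ i, ‖∇ (a i) x‖ ^ 2 := by
        simp only [mul_pow, sq_abs, ← Finset.mul_sum]
        norm_num

theorem exists_contDiff_eqOn_one_norm_gradient_le {K : Set E} (hK : IsCompact K) {δ : ℝ}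
    (hδ : 0 < δ) :
    ∃ χ : E → ℝ, ContDiff ℝ 1 χ ∧ HasCompactSupport χ ∧ (∀ x, |χ x| ≤ 1) ∧
      (∀ x ∈ K, χ x = 1) ∧ ∀ x, ‖∇ χ x‖ ≤ δ := by
  let b : ContDiffBump (0 : E) := ⟨1, 2, one_pos, one_lt_two⟩
  obtain ⟨C, hC⟩ := (hasCompactSupport_gradient b.hasCompactSupport).exists_bound_of_continuous
    (continuous_gradient b.contDiff)
  obtain ⟨R, hR, hKR⟩ := hK.isBounded.exists_pos_norm_le
  set s := max R (C / δ)
  have hs₀ : 0 < s := hR.trans_le (le_max_left _ _)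
  have hsC : C ≤ δ * s := (div_le_iff₀' hδ).mp (le_max_right _ _)
  refine ⟨fun x => b (s⁻¹ • x), b.contDiff.comp (contDiff_const_smul _),
    b.hasCompactSupport.comp_homeomorph (Homeomorph.smulOfNeZero s⁻¹ (by positivity)),
    fun x => (abs_of_nonneg b.nonneg).trans_le b.le_one, fun x hx => ?_, fun x => ?_⟩
  · apply b.one_of_mem_closedBall
    rw [mem_closedBall_zero_iff, norm_smul, norm_inv, Real.norm_of_nonneg hs₀.le]
    exact inv_mul_le_one_of_le₀ ((hKR x hx).trans (le_max_left _ _)) hs₀.le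
  · rw [norm_gradient_eq_norm_fderiv, fderiv_comp_smul, norm_smul, norm_inv,
      Real.norm_of_nonneg hs₀.le, ← norm_gradient_eq_norm_fderiv, inv_mul_le_iff₀ hs₀, mul_comm s]
    exact (hC _).trans hsC

theorem exists_forall_norm_sub_lt_exp_sub_le {V : E → ℝ} {K : Set E} (hV : ContDiff ℝ 1 V)
    (hK : IsCompact K) {δ : ℝ} (hδ : 0 < δ) :
    ∃ ε > 0, ∀ x ∈ K, ∀ y, ‖x - y‖ < ε → exp (V x - V y) ≤ 2 ∧ ‖∇ V x - ∇ V y‖ ≤ δ := by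
  have hlog : 0 < Real.log 2 := Real.log_pos one_lt_two
  have hcont : Continuous fun x => (V x, ∇ V x) := hV.continuous.prodMk (continuous_gradient hV)
  obtain ⟨ε, hε, h⟩ := Metric.mem_uniformity_dist.mp <|
    hK.uniformContinuousAt_of_continuousAt _ (fun x _ => hcont.continuousAt)
      (Metric.dist_mem_uniformity (lt_min hlog hδ))
  refine ⟨ε, hε, fun x hx y hxy => ?_⟩
  have hclose : max (dist (V x) (V y)) (dist (∇ V x) (∇ V y)) < min (Real.log 2) δ :=
    h (a := x) (b := y) (by rwa [dist_eq_norm]) hx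
  rw [max_lt_iff, lt_min_iff, lt_min_iff, Real.dist_eq, dist_eq_norm] at hclose
  exact ⟨(Real.le_log_iff_exp_le two_pos).mp ((le_abs_self _).trans hclose.1.1.le),
    hclose.2.2.le⟩

/-- The generator `Lφ = Δφ - ⟨∇V, ∇φ⟩` of the diffusion reversible for the density `e^{-V}`. -/
noncomputable def generator (V φ : E → ℝ) (x : E) : ℝ := Δ φ x - ⟪∇ V x, ∇ φ x⟫

theorem generator_eq_sum {V φ : E → ℝ} (hφ : ContDiff ℝ 2 φ) (x : E) :
    generator V φ x = ∑ i, (∂[i] (∂[i] φ) x - ∂[i] V x * ∂[i] φ x) := by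
  rw [generator, laplacian_eq_sum_partialDeriv hφ, inner_gradient_gradient,
    Finset.sum_sub_distrib]

theorem contDiff_generator {V φ : E → ℝ} (hV : ContDiff ℝ 2 V) (hφ : ContDiff ℝ 3 φ) :
    ContDiff ℝ 1 (generator V φ) := by
  rw [funext (generator_eq_sum (hφ.of_le (by norm_num)))]
  refine ContDiff.sum fun i _ => ?_
  exact (contDiff_partialDeriv i (contDiff_partialDeriv (k := 2) i hφ le_rfl) le_rfl).sub
    ((contDiff_partialDeriv i hV le_rfl).mul (contDiff_partialDeriv i hφ (by norm_num)))

theorem continuous_generator {V φ : E → ℝ} (hV : ContDiff ℝ 1 V) (hφ : ContDiff ℝ 2 φ) :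
    Continuous (generator V φ) := by
  rw [funext (generator_eq_sum hφ)]
  exact continuous_finsetSum _ fun i _ =>
    (continuous_partialDeriv i (contDiff_partialDeriv i hφ le_rfl)).sub
      ((continuous_partialDeriv i hV).mul (continuous_partialDeriv i (hφ.of_le (by norm_num))))

theorem hasCompactSupport_generator {V φ : E → ℝ} (hφ : ContDiff ℝ 2 φ)
    (hφc : HasCompactSupport φ) : HasCompactSupport (generator V φ) := by
  refine hφc.mono' fun x hx => ?_
  contrapose! hx
  have h₁ (i) : ∂[i] φ x = 0 := image_eq_zero_of_notMem_tsupport fun h =>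
    hx (tsupport_fderiv_apply_subset ℝ _ h)
  have h₂ (i) : ∂[i] (∂[i] φ) x = 0 := image_eq_zero_of_notMem_tsupport fun h =>
    hx (tsupport_fderiv_apply_subset ℝ _ (tsupport_fderiv_apply_subset ℝ _ h))
  simp [generator_eq_sum hφ, h₁, h₂]

theorem generator_add {V φ ψ : E → ℝ} (hφ : ContDiff ℝ 2 φ) (hψ : ContDiff ℝ 2 ψ) :
    generator V (φ + ψ) = generator V φ + generator V ψ := by
  ext x
  have hφ' : DifferentiableAt ℝ φ x := hφ.differentiable two_ne_zero x
  have hψ' : DifferentiableAt ℝ ψ x := hψ.differentiable two_ne_zero x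
  simp only [generator, gradient, Pi.add_apply, hφ.contDiffAt.laplacian_add hψ.contDiffAt,
    fderiv_add hφ' hψ', map_add, inner_add_right]
  ring

theorem generator_smul {V φ : E → ℝ} (r : ℝ) (hφ : ContDiff ℝ 2 φ) :
    generator V (r • φ) = r • generator V φ := by
  ext x
  have hφ' : DifferentiableAt ℝ φ x := hφ.differentiable two_ne_zero x
  simp only [generator, gradient, Pi.smul_apply, laplacian_smul r hφ.contDiffAt,
    fderiv_const_smul hφ', map_smul, inner_smul_right, smul_eq_mul]
  ring

theorem partialDeriv_generator {V φ : E → ℝ} (i : Fin (Module.finrank ℝ E))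
    (hV : ContDiff ℝ 2 V) (hφ : ContDiff ℝ 3 φ) (x : E) :
    ∂[i] (generator V φ) x =
      generator V (∂[i] φ) x - iteratedFDeriv ℝ 2 V x ![stdOrthonormalBasis ℝ E i, ∇ φ x] := by
  have hφ₂ : ContDiff ℝ 2 φ := hφ.of_le (by norm_num)
  have hV₁ (j) : DifferentiableAt ℝ (∂[j] V) x :=
    (contDiff_partialDeriv (k := 1) j hV le_rfl).differentiable one_ne_zero x
  have hφ₁ (j) : DifferentiableAt ℝ (∂[j] φ) x :=
    (contDiff_partialDeriv (k := 1) j hφ₂ le_rfl).differentiable one_ne_zero x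
  have hφ' (j) : ContDiff ℝ 2 (∂[j] φ) := contDiff_partialDeriv j hφ le_rfl
  have hφ'' (j) : DifferentiableAt ℝ (∂[j] (∂[j] φ)) x :=
    (contDiff_partialDeriv (k := 1) j (hφ' j) le_rfl).differentiable one_ne_zero x
  rw [funext (generator_eq_sum hφ₂), generator_eq_sum (hφ' i),
    iteratedFDeriv_two_basis_gradient i hV, ← Finset.sum_sub_distrib]
  have hdiff (j) : DifferentiableAt ℝ (fun y => ∂[j] V y * ∂[j] φ y) x := (hV₁ j).mul (hφ₁ j)
  conv_lhs => rw [partialDeriv, fderiv_fun_sum fun j _ => (hφ'' j).fun_sub (hdiff j)]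
  rw [sum_apply]
  refine Finset.sum_congr rfl fun j _ => ?_
  rw [fderiv_fun_sub (hφ'' j) (hdiff j)]
  change ∂[i] (∂[j] (∂[j] φ)) x - ∂[i] (fun y => ∂[j] V y * ∂[j] φ y) x = _
  rw [partialDeriv_mul i (hV₁ j) (hφ₁ j), partialDeriv_comm i j (hφ' j),
    partialDeriv_comm i j hφ₂]
  ring

/-! ### Legendre transform and transport-information inequality -/

/-- The Legendre transform `α*(s) = sup_r (r s - α(r))`, with values in `[0, ∞]`; since `α(0) = 0`
in the applications, truncating the subtraction does not change the supremum. -/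
noncomputable def legendreTransform (α : ℝ≥0∞ → ℝ≥0∞) (s : ℝ≥0∞) : ℝ≥0∞ := ⨆ r, r * s - α r

theorem mul_le_legendreTransform_add (α : ℝ≥0∞ → ℝ≥0∞) (r s : ℝ≥0∞) :
    r * s ≤ legendreTransform α s + α r :=
  tsub_le_iff_right.1 (le_iSup (fun r => r * s - α r) r)

theorem legendreTransform_eq_top {α : ℝ≥0∞ → ℝ≥0∞} {s : ℝ≥0∞} (hs : s ≠ 0) (hα : α ⊤ ≠ ⊤) :
    legendreTransform α s = ⊤ := by
  have h := mul_le_legendreTransform_add α ⊤ s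
  rw [ENNReal.top_mul hs, top_le_iff, ENNReal.add_eq_top] at h
  exact h.resolve_right hα

theorem legendreTransform_le_half (α : ℝ≥0∞ → ℝ≥0∞) (s : ℝ≥0∞) :
    legendreTransform α s ≤ legendreTransform α (2 * s) / 2 := by
  refine iSup_le fun r => ?_
  rw [ENNReal.le_div_iff_mul_le (by simp) (by simp)]
  calc (r * s - α r) * 2 = r * (2 * s) - α r * 2 := by
        rw [ENNReal.sub_mul fun _ _ => ENNReal.ofNat_ne_top, mul_assoc, mul_comm s]
    _ ≤ r * (2 * s) - α r := tsub_le_tsub_left (le_mul_of_one_le_right' one_le_two) _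
    _ ≤ legendreTransform α (2 * s) := le_iSup (fun r => r * (2 * s) - α r) r

section Coupling

variable {X : Type*} [MeasurableSpace X]

theorem ofReal_abs_integral_sub_le_lintegral_of_coupling {c : X → X → ℝ≥0∞} {ρ : X → ℝ}
    {γ : Measure (X × X)} (hc : Measurable (uncurry c)) (hL : costLipNorm c ρ ≠ ⊤)
    (hρ₁ : Integrable ρ (γ.map Prod.fst)) (hρ₂ : Integrable ρ (γ.map Prod.snd))
    (hγ : ∫⁻ p, c p.1 p.2 ∂γ ≠ ⊤) :
    ENNReal.ofReal |∫ x, ρ x ∂γ.map Prod.fst - ∫ x, ρ x ∂γ.map Prod.snd| ≤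
      costLipNorm c ρ * ∫⁻ p, c p.1 p.2 ∂γ := by
  have hint₁ : Integrable (fun p : X × X => ρ p.1) γ := hρ₁.comp_measurable measurable_fst
  have hint₂ : Integrable (fun p : X × X => ρ p.2) γ := hρ₂.comp_measurable measurable_snd
  rw [integral_map measurable_fst.aemeasurable hρ₁.aestronglyMeasurable,
    integral_map measurable_snd.aemeasurable hρ₂.aestronglyMeasurable,
    ← integral_sub hint₁ hint₂, ← Real.norm_eq_abs, ofReal_norm]
  calc ‖∫ p, (ρ p.1 - ρ p.2) ∂γ‖ₑ
      ≤ ∫⁻ p, ‖ρ p.1 - ρ p.2‖ₑ ∂γ := enorm_integral_le_lintegral_enorm _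
    _ ≤ ∫⁻ p, costLipNorm c ρ * c p.1 p.2 ∂γ := by
        refine lintegral_mono_ae ((ae_lt_top hc hγ).mono fun p hp => ?_)
        rw [← ofReal_norm, Real.norm_eq_abs]
        exact (ENNReal.div_le_iff_le_mul (Or.inr hL) (Or.inl hp.ne)).1
          (le_iSup₂_of_le p.1 p.2 le_rfl)
    _ = costLipNorm c ρ * ∫⁻ p, c p.1 p.2 ∂γ := lintegral_const_mul _ hc

theorem ofReal_abs_integral_sub_le_transportCost {c : X → X → ℝ≥0∞} {ρ : X → ℝ}
    {ν μ : Measure X} (hc : Measurable (uncurry c)) (hL : costLipNorm c ρ ≠ ⊤)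
    (hρν : Integrable ρ ν) (hρμ : Integrable ρ μ) (hT : transportCost c ν μ ≠ ⊤) :
    ENNReal.ofReal |∫ x, ρ x ∂ν - ∫ x, ρ x ∂μ| ≤ costLipNorm c ρ * transportCost c ν μ := by
  have hlim : Tendsto (fun t => costLipNorm c ρ * t) (𝓝[>] transportCost c ν μ)
      (𝓝 (costLipNorm c ρ * transportCost c ν μ)) :=
    (ENNReal.Tendsto.const_mul tendsto_id (Or.inr hL)).mono_left nhdsWithin_le_nhds
  have := nhdsGT_neBot_of_exists_gt ⟨⊤, hT.lt_top⟩
  refine ge_of_tendsto hlim (eventually_mem_nhdsWithin.mono fun t ht => ?_)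
  rw [mem_Ioi, transportCost, iInf_lt_iff] at ht
  obtain ⟨γ, hlt⟩ := ht
  obtain ⟨⟨rfl, rfl, -⟩, hγ⟩ := iInf_lt_iff.1 hlt
  exact (ofReal_abs_integral_sub_le_lintegral_of_coupling hc hL hρν hρμ hγ.ne_top).trans
    (by gcongr)

theorem isProbabilityMeasure_withDensity_ofReal {μ : Measure X}
    {f : X → ℝ} (hf : 0 ≤ f) (hf₁ : ∫ x, f x ∂μ = 1) :
    IsProbabilityMeasure (μ.withDensity fun x => ENNReal.ofReal (f x)) := by
  constructor
  rw [withDensity_apply _ .univ, Measure.restrict_univ, ← ofReal_integral_eq_lintegral_ofReal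
    (integrable_of_integral_eq_one hf₁) (ae_of_all _ hf), hf₁, ENNReal.ofReal_one]

theorem ofReal_abs_integral_sub_le_costLipNorm_mul {c : X → X → ℝ≥0∞} {μ : Measure X}
    {ρ f : X → ℝ} (hc : Measurable (uncurry c))
    (hL : costLipNorm c ρ ≠ ⊤) (hρ : Integrable ρ μ) (hf : ∀ x, 0 < f x) (hfm : Measurable f)
    (hfρ : Integrable (fun x => f x * ρ x) μ)
    (hT : transportCost c (μ.withDensity fun x => ENNReal.ofReal (f x)) μ ≠ ⊤) :
    ENNReal.ofReal |∫ x, f x * ρ x ∂μ - ∫ x, ρ x ∂μ| ≤ costLipNorm c ρ *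
      transportCost c (μ.withDensity fun x => ENNReal.ofReal (f x)) μ := by
  have hfin : ∀ᵐ x ∂μ, ENNReal.ofReal (f x) < ⊤ := ae_of_all _ fun _ => ENNReal.ofReal_lt_top
  have hsmul (x : X) : (ENNReal.ofReal (f x)).toReal • ρ x = f x * ρ x := by
    rw [ENNReal.toReal_ofReal (hf x).le, smul_eq_mul]
  have hint : ∫ x, ρ x ∂(μ.withDensity fun x => ENNReal.ofReal (f x)) = ∫ x, f x * ρ x ∂μ := by
    simp only [integral_withDensity_eq_integral_toReal_smul hfm.ennreal_ofReal hfin, hsmul]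
  rw [← hint]
  refine ofReal_abs_integral_sub_le_transportCost hc hL ?_ hρ hT
  rw [integrable_withDensity_iff_integrable_smul' hfm.ennreal_ofReal hfin]
  simpa only [hsmul] using hfρ

end Coupling

variable [MeasurableSpace E]

/-- The Fisher information of the measure with density `f` with respect to `μ`. -/
noncomputable def fisherInformation (μ : Measure E) (f : E → ℝ) : ℝ≥0∞ :=
  ∫⁻ x, ENNReal.ofReal (‖∇ (fun y => √(f y)) x‖ ^ 2) ∂μ

/-- The transport-information inequality `α(T_c(ν, μ)) ≤ I(ν|μ)` for all probability measures
`ν = f·μ` with `f` positive and `C¹`. -/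
def TransportInformationInequality (α : ℝ≥0∞ → ℝ≥0∞) (c : E → E → ℝ≥0∞) (μ : Measure E) : Prop :=
  ∀ f : E → ℝ, (∀ x, 0 < f x) → ContDiff ℝ 1 f →
    IsProbabilityMeasure (μ.withDensity fun x => ENNReal.ofReal (f x)) →
    α (transportCost c (μ.withDensity fun x => ENNReal.ofReal (f x)) μ) ≤ fisherInformation μ f

theorem fisherInformation_one_add_mul_le {μ : Measure E} {f : E → ℝ} {t : ℝ}
    (hf : ∀ x, 0 < f x) (hf' : Differentiable ℝ f) (ht : 0 ≤ t) (ht₁ : t < 1) :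
    fisherInformation μ (fun x => 1 + t * (f x - 1)) ≤
      ENNReal.ofReal t * fisherInformation μ f := by
  rw [fisherInformation, fisherInformation, ← lintegral_const_mul' _ _ ENNReal.ofReal_ne_top]
  refine lintegral_mono fun x => ?_
  have hft : 0 < 1 + t * (f x - 1) := by nlinarith [mul_nonneg ht (hf x).le]
  have hgrad : ‖∇ (fun y => 1 + t * (f y - 1)) x‖ = t * ‖∇ f x‖ := by
    simp only [norm_gradient_eq_norm_fderiv, fderiv_const_add, fderiv_sub_const,
      fderiv_const_mul ((hf' x).sub_const 1), norm_smul, Real.norm_of_nonneg ht]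
  rw [← ENNReal.ofReal_mul ht, norm_gradient_sqrt_sq (hf' x) (hf x),
    norm_gradient_sqrt_sq (f := fun y => 1 + t * (f y - 1)) (by fun_prop) hft, hgrad]
  refine ENNReal.ofReal_le_ofReal ?_
  rw [mul_div_assoc', div_le_div_iff₀ (by positivity) (by have := hf x; positivity)]
  nlinarith [mul_nonneg (mul_nonneg ht (sub_nonneg.2 ht₁.le)) (sq_nonneg ‖∇ f x‖)]

theorem fisherInformation_sum_sq_add_const_le {ι : Type*} [Fintype ι] {μ : Measure E}
    {a : ι → E → ℝ} {r δ : ℝ} (ha : ∀ i, Differentiable ℝ (a i)) (hr : 0 < r) (hδ : 0 < δ)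
    (hint : Integrable (fun x => ∑ i, ‖∇ (a i) x‖ ^ 2) μ) :
    fisherInformation μ (fun x => r * (∑ i, a i x ^ 2 + δ)) ≤
      ENNReal.ofReal (r * ∫ x, ∑ i, ‖∇ (a i) x‖ ^ 2 ∂μ) := by
  rw [← integral_const_mul, ofReal_integral_eq_lintegral_ofReal (hint.const_mul r)
    (ae_of_all _ fun x => by positivity)]
  refine lintegral_mono fun x => ENNReal.ofReal_le_ofReal ?_
  have hdiff : Differentiable ℝ fun y => ∑ i, a i y ^ 2 := by fun_prop
  have hgrad : ‖∇ (fun y => r * (∑ i, a i y ^ 2 + δ)) x‖ ^ 2 =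
      r ^ 2 * ‖∇ (fun y => ∑ i, a i y ^ 2) x‖ ^ 2 := by
    simp only [norm_gradient_eq_norm_fderiv, fderiv_const_mul ((hdiff x).add_const δ),
      fderiv_add_const, norm_smul, mul_pow, Real.norm_eq_abs, sq_abs]
  rw [norm_gradient_sqrt_sq (f := fun y => r * (∑ i, a i y ^ 2 + δ))
    ((hdiff x).add_const δ |>.const_mul r) (by positivity), hgrad, div_le_iff₀ (by positivity)]
  calc r ^ 2 * ‖∇ (fun y => ∑ i, a i y ^ 2) x‖ ^ 2
      ≤ r ^ 2 * (4 * (∑ i, a i x ^ 2) * ∑ i, ‖∇ (a i) x‖ ^ 2) := by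
        gcongr
        exact norm_gradient_sum_sq_sq_le fun i => ha i x
    _ ≤ r ^ 2 * (4 * (∑ i, a i x ^ 2 + δ) * ∑ i, ‖∇ (a i) x‖ ^ 2) := by
        gcongr
        exact le_add_of_nonneg_right hδ.le
    _ = r * (∑ i, ‖∇ (a i) x‖ ^ 2) * (4 * (r * (∑ i, a i x ^ 2 + δ))) := by ring

variable [BorelSpace E]

section TransportInformation

variable {α : ℝ≥0∞ → ℝ≥0∞} {c : E → E → ℝ≥0∞} {μ : Measure E} {ρ f : E → ℝ}

/- For `‖ρ‖_c = 0` only the finiteness of the transport cost matters; it is available for the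
densities `1 + t (f - 1)` with `t` small, and these detect `∫ f ρ dμ`. -/
theorem integral_mul_eq_of_costLipNorm_eq_zero [IsProbabilityMeasure μ]
    (h : TransportInformationInequality α c μ) (hα : 0 < α ⊤) (hc : Measurable (uncurry c))
    (hL : costLipNorm c ρ = 0) (hρ : Integrable ρ μ) (hf : ∀ x, 0 < f x) (hf' : ContDiff ℝ 1 f)
    (hf₁ : ∫ x, f x ∂μ = 1) (hfρ : Integrable (fun x => f x * ρ x) μ)
    (hI : fisherInformation μ f ≠ ⊤) : ∫ x, f x * ρ x ∂μ = ∫ x, ρ x ∂μ := by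
  have hfint : Integrable f μ := integrable_of_integral_eq_one hf₁
  obtain ⟨t, ⟨ht, ht₁⟩, hIt⟩ : ∃ t ∈ Ioo (0 : ℝ) 1,
      ENNReal.ofReal t * fisherInformation μ f < α ⊤ := by
    have hlim : Tendsto (fun t => ENNReal.ofReal t * fisherInformation μ f) (𝓝[>] 0) (𝓝 0) := by
      have := ENNReal.Tendsto.mul_const (ENNReal.tendsto_ofReal (tendsto_id (x := 𝓝 (0 : ℝ))))
        (Or.inr hI)
      simpa using this.mono_left nhdsWithin_le_nhds
    exact ((eventually_mem_set.2 (Ioo_mem_nhdsGT one_pos)).and (hlim.eventually_lt_const hα)).exists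
  have hft (x : E) : 0 < 1 + t * (f x - 1) := by nlinarith [mul_pos ht (hf x)]
  have hft' : ContDiff ℝ 1 fun x => 1 + t * (f x - 1) := by fun_prop
  have hft₁ : ∫ x, (1 + t * (f x - 1)) ∂μ = 1 := by
    have hsub : Integrable (fun x => f x - 1) μ := hfint.sub (integrable_const 1)
    rw [integral_add (integrable_const 1) (hsub.const_mul t), integral_const_mul,
      integral_sub hfint (integrable_const 1), hf₁]
    simp
  have hftρ (x : E) : (1 + t * (f x - 1)) * ρ x = (1 - t) * ρ x + t * (f x * ρ x) := by ring
  have hT : transportCost c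
      (μ.withDensity fun x => ENNReal.ofReal (1 + t * (f x - 1))) μ ≠ ⊤ := fun hT =>
    (hT ▸ h _ hft hft' (isProbabilityMeasure_withDensity_ofReal (fun x => (hft x).le) hft₁)).not_gt
      ((fisherInformation_one_add_mul_le hf (hf'.differentiable one_ne_zero) ht.le ht₁).trans_lt
        hIt)
  have hzero := ofReal_abs_integral_sub_le_costLipNorm_mul hc (by simp [hL]) hρ hft
    hft'.continuous.measurable
    (by simpa only [hftρ] using (hρ.const_mul _).fun_add (hfρ.const_mul _)) hT
  simp only [hL, zero_mul, nonpos_iff_eq_zero, ENNReal.ofReal_eq_zero, abs_nonpos_iff, hftρ]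
    at hzero
  rw [integral_add (hρ.const_mul _) (hfρ.const_mul _), integral_const_mul,
    integral_const_mul] at hzero
  exact mul_left_cancel₀ ht.ne' (by linarith)

theorem ofReal_abs_integral_sub_le_legendreTransform_add [IsProbabilityMeasure μ]
    (h : TransportInformationInequality α c μ) (hα : 0 < α ⊤) (hc : Measurable (uncurry c))
    (hL : costLipNorm c ρ ≠ ⊤) (hρ : Integrable ρ μ) (hf : ∀ x, 0 < f x)
    (hf' : ContDiff ℝ 1 f) (hf₁ : ∫ x, f x ∂μ = 1) (hfρ : Integrable (fun x => f x * ρ x) μ) :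
    ENNReal.ofReal |∫ x, f x * ρ x ∂μ - ∫ x, ρ x ∂μ| ≤
      legendreTransform α (costLipNorm c ρ) + fisherInformation μ f := by
  have hαI := h f hf hf' (isProbabilityMeasure_withDensity_ofReal (fun x => (hf x).le) hf₁)
  by_cases hT : transportCost c (μ.withDensity fun x => ENNReal.ofReal (f x)) μ = ⊤
  · by_cases hI : fisherInformation μ f = ⊤
    · simp [hI]
    by_cases hL₀ : costLipNorm c ρ = 0
    · simp [integral_mul_eq_of_costLipNorm_eq_zero h hα hc hL₀ hρ hf hf' hf₁ hfρ hI]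
    · simp [legendreTransform_eq_top hL₀ (ne_top_of_le_ne_top hI (hT ▸ hαI))]
  · refine (ofReal_abs_integral_sub_le_costLipNorm_mul hc hL hρ hf hf'.continuous.measurable
      hfρ hT).trans ?_
    rw [mul_comm]
    exact (mul_le_legendreTransform_add α _ _).trans (by gcongr)

theorem sub_mul_integral_sum_sq_le_add {ι : Type*} [Fintype ι] [IsProbabilityMeasure μ]
    (h : TransportInformationInequality α c μ) (hα : 0 < α ⊤) (hc : Measurable (uncurry c))
    (hL : costLipNorm c ρ ≠ ⊤) (hA : legendreTransform α (costLipNorm c ρ) ≠ ⊤)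
    (hρ : Integrable ρ μ) {a : ι → E → ℝ} (ha : ∀ i, ContDiff ℝ 1 (a i))
    (hac : ∀ i, HasCompactSupport (a i)) {δ : ℝ} (hδ : 0 < δ) :
    (∫ x, ρ x ∂μ - (legendreTransform α (costLipNorm c ρ)).toReal) * ∫ x, ∑ i, a i x ^ 2 ∂μ ≤
      ∫ x, ∑ i, ‖∇ (a i) x‖ ^ 2 ∂μ + ∫ x, ρ x * ∑ i, a i x ^ 2 ∂μ +
        δ * (legendreTransform α (costLipNorm c ρ)).toReal := by
  set A := legendreTransform α (costLipNorm c ρ)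
  set q : E → ℝ := fun x => ∑ i, a i x ^ 2 with hq
  have hqC : ContDiff ℝ 1 q := by fun_prop
  have hqc (i) : HasCompactSupport fun x => a i x ^ 2 := (hac i).comp_left (g := (· ^ 2)) (by simp)
  have hq_nonneg (x : E) : 0 ≤ q x := by positivity
  have hqint : Integrable q μ := integrable_finsetSum _ fun i _ =>
    ((ha i).continuous.pow 2).integrable_of_hasCompactSupport (hqc i)
  have hρq : Integrable (fun x => ρ x * q x) μ := by
    simp only [hq, Finset.mul_sum]
    exact integrable_finsetSum _ fun i _ =>
      hρ.locallyIntegrable.integrable_smul_right_of_hasCompactSupport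
        ((ha i).continuous.pow 2) (hqc i)
  have hS : Integrable (fun x => ∑ i, ‖∇ (a i) x‖ ^ 2) μ :=
    integrable_finsetSum _ fun i _ => integrable_norm_gradient_sq μ (ha i) (hac i)
  have hQδ : 0 < ∫ x, q x ∂μ + δ := add_pos_of_nonneg_of_pos (integral_nonneg hq_nonneg) hδ
  set r := (∫ x, q x ∂μ + δ)⁻¹
  have hr₀ : 0 < r := inv_pos.2 hQδ
  have hf₁ : ∫ x, r * (q x + δ) ∂μ = 1 := by
    rw [integral_const_mul, integral_add hqint (integrable_const δ), integral_const]
    simpa using inv_mul_cancel₀ hQδ.ne'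
  have hfρ (x : E) : r * (q x + δ) * ρ x = r * (ρ x * q x + δ * ρ x) := by ring
  have hle := (ofReal_abs_integral_sub_le_legendreTransform_add h hα hc hL hρ
    (f := fun x => r * (q x + δ)) (fun x => by positivity) (by fun_prop) hf₁
    (by simpa only [hfρ] using (hρq.fun_add (hρ.const_mul δ)).const_mul r)).trans
      (add_le_add_right (fisherInformation_sum_sq_add_const_le
        (fun i => (ha i).differentiable one_ne_zero) hr₀ hδ hS) A)
  rw [← ENNReal.ofReal_toReal hA, ← ENNReal.ofReal_add (by positivity) (by positivity),
    ENNReal.ofReal_le_ofReal_iff (by positivity), abs_sub_comm] at hle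
  simp only [hfρ, integral_const_mul, integral_add hρq (hρ.const_mul δ)] at hle
  have hmul := mul_le_mul_of_nonneg_right ((le_abs_self _).trans hle) hQδ.le
  have hr : r * (∫ x, q x ∂μ + δ) = 1 := inv_mul_cancel₀ hQδ.ne'
  linear_combination hmul +
    (∫ x, ∑ i, ‖∇ (a i) x‖ ^ 2 ∂μ + ∫ x, ρ x * q x ∂μ + δ * ∫ x, ρ x ∂μ) * hr

theorem sub_mul_integral_sum_sq_le {ι : Type*} [Fintype ι] [IsProbabilityMeasure μ]
    (h : TransportInformationInequality α c μ) (hα : 0 < α ⊤) (hc : Measurable (uncurry c))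
    (hL : costLipNorm c ρ ≠ ⊤) (hA : legendreTransform α (costLipNorm c ρ) ≠ ⊤)
    (hρ : Integrable ρ μ) {a : ι → E → ℝ} (ha : ∀ i, ContDiff ℝ 1 (a i))
    (hac : ∀ i, HasCompactSupport (a i)) :
    (∫ x, ρ x ∂μ - (legendreTransform α (costLipNorm c ρ)).toReal) * ∫ x, ∑ i, a i x ^ 2 ∂μ ≤
      ∫ x, ∑ i, ‖∇ (a i) x‖ ^ 2 ∂μ + ∫ x, ρ x * ∑ i, a i x ^ 2 ∂μ := by
  refine le_of_tendsto_of_tendsto (b := 𝓝[>] (0 : ℝ)) tendsto_const_nhds ?_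
    (eventually_mem_nhdsWithin.mono fun δ hδ =>
      sub_mul_integral_sum_sq_le_add h hα hc hL hA hρ ha hac hδ)
  simpa using ((tendsto_id.mul_const _).const_add _).mono_left
    (nhdsWithin_le_nhds (a := (0 : ℝ)) (s := Ioi 0))

end TransportInformation

/-! ### Bochner's formula -/

/-- The probability measure with density proportional to `e^{-V}`. It is the zero measure when
`e^{-V}` is not integrable. -/
noncomputable def gibbsMeasure (V : E → ℝ) : Measure E := volume.tilted fun x => -V x

instance (V : E → ℝ) : IsFiniteMeasure (gibbsMeasure V) := by
  by_cases hV : Integrable (fun x => exp (-V x))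
  · have := isProbabilityMeasure_tilted hV
    exact inferInstanceAs (IsFiniteMeasure (volume.tilted fun x => -V x))
  · rw [gibbsMeasure, tilted_of_not_integrable hV]
    infer_instance

theorem integral_gibbsMeasure (V f : E → ℝ) :
    ∫ x, f x ∂gibbsMeasure V = (∫ x, exp (-V x))⁻¹ * ∫ x, f x * exp (-V x) := by
  rw [gibbsMeasure, integral_tilted, ← integral_const_mul]
  simp only [smul_eq_mul]
  congr with x
  ring

theorem integral_mul_generator {V f φ : E → ℝ} (hV : ContDiff ℝ 1 V) (hf : ContDiff ℝ 1 f)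
    (hφ : ContDiff ℝ 2 φ) (hφc : HasCompactSupport φ) :
    ∫ x, f x * generator V φ x ∂gibbsMeasure V = -∫ x, ⟪∇ f x, ∇ φ x⟫ ∂gibbsMeasure V := by
  have hφ' (i) : ContDiff ℝ 1 (∂[i] φ) := contDiff_partialDeriv i hφ le_rfl
  have hw : ContDiff ℝ 1 fun x => exp (-V x) := hV.neg.exp
  have hψ (i) : ContDiff ℝ 1 fun x => ∂[i] φ x * exp (-V x) := (hφ' i).mul hw
  have hψc (i) : HasCompactSupport fun x => ∂[i] φ x * exp (-V x) :=
    (hasCompactSupport_partialDeriv i hφc).mul_right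
  have hψ' (i) (x : E) : ∂[i] (fun x => ∂[i] φ x * exp (-V x)) x =
      (∂[i] (∂[i] φ) x - ∂[i] V x * ∂[i] φ x) * exp (-V x) := by
    have hwx : ∂[i] (fun x => exp (-V x)) x = -∂[i] V x * exp (-V x) := by
      simp [partialDeriv, fderiv_exp (hV.neg.differentiable one_ne_zero x), mul_comm]
    rw [partialDeriv_mul i ((hφ' i).differentiable one_ne_zero x)
      (hw.differentiable one_ne_zero x), hwx]
    ring
  have hleft (x : E) : f x * generator V φ x * exp (-V x) =
      ∑ i, f x * ∂[i] (fun x => ∂[i] φ x * exp (-V x)) x := by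
    simp only [hψ', generator_eq_sum hφ, ← Finset.mul_sum, ← Finset.sum_mul, mul_assoc]
  have hright (x : E) : ⟪∇ f x, ∇ φ x⟫ * exp (-V x) =
      ∑ i, ∂[i] f x * (∂[i] φ x * exp (-V x)) := by
    simp only [inner_gradient_gradient, Finset.sum_mul, mul_assoc]
  simp only [integral_gibbsMeasure, hleft, hright]
  rw [integral_finsetSum, integral_finsetSum, ← mul_neg, ← Finset.sum_neg_distrib]
  · exact congrArg _ (Finset.sum_congr rfl fun i _ => integral_mul_partialDeriv i hf (hψ i) (hψc i))
  · exact fun i _ => ((continuous_partialDeriv i hf).mul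
      (hψ i).continuous).integrable_of_hasCompactSupport (hψc i).mul_left
  · exact fun i _ => (hf.continuous.mul
      (continuous_partialDeriv i (hψ i))).integrable_of_hasCompactSupport
        (hasCompactSupport_partialDeriv i (hψc i)).mul_left

theorem integral_generator_sq {V φ : E → ℝ} (hV : ContDiff ℝ 2 V) (hφ : ContDiff ℝ 3 φ)
    (hφc : HasCompactSupport φ) :
    ∫ x, generator V φ x ^ 2 ∂gibbsMeasure V =
      ∫ x, ∑ i, ‖∇ (∂[i] φ) x‖ ^ 2 ∂gibbsMeasure V +
        ∫ x, iteratedFDeriv ℝ 2 V x ![∇ φ x, ∇ φ x] ∂gibbsMeasure V := by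
  have hV₁ : ContDiff ℝ 1 V := hV.of_le (by norm_num)
  have hφ₂ : ContDiff ℝ 2 φ := hφ.of_le (by norm_num)
  have hφ' (i) : ContDiff ℝ 2 (∂[i] φ) := contDiff_partialDeriv i hφ le_rfl
  have hφ₁ (i) : ContDiff ℝ 1 (∂[i] φ) := (hφ' i).of_le (by norm_num)
  have hφc' (i) : HasCompactSupport (∂[i] φ) := hasCompactSupport_partialDeriv i hφc
  have hpoint (x : E) : ⟪∇ (generator V φ) x, ∇ φ x⟫ =
      ∑ i, ∂[i] φ x * generator V (∂[i] φ) x - iteratedFDeriv ℝ 2 V x ![∇ φ x, ∇ φ x] := by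
    rw [inner_gradient_gradient, ← iteratedFDeriv_two_gradient_gradient,
      ← Finset.sum_sub_distrib]
    exact Finset.sum_congr rfl fun i _ => by rw [partialDeriv_generator i hV hφ]; ring
  have hint (i) : Integrable (fun x => ∂[i] φ x * generator V (∂[i] φ) x) (gibbsMeasure V) :=
    ((hφ' i).continuous.mul (continuous_generator hV₁
      (hφ' i))).integrable_of_hasCompactSupport (hφc' i).mul_right
  have hint_hess : Integrable (fun x => iteratedFDeriv ℝ 2 V x ![∇ φ x, ∇ φ x])
      (gibbsMeasure V) := integrable_iteratedFDeriv_two_gradient _ hV (hφ.of_le (by norm_num)) hφc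
  have hint_grad (i) : Integrable (fun x => ‖∇ (∂[i] φ) x‖ ^ 2) (gibbsMeasure V) :=
    integrable_norm_gradient_sq _ (hφ₁ i) (hφc' i)
  calc ∫ x, generator V φ x ^ 2 ∂gibbsMeasure V
      = -∫ x, ⟪∇ (generator V φ) x, ∇ φ x⟫ ∂gibbsMeasure V := by
        simp only [sq]
        exact integral_mul_generator hV₁ (contDiff_generator hV hφ) hφ₂ hφc
    _ = -∑ i, ∫ x, ∂[i] φ x * generator V (∂[i] φ) x ∂gibbsMeasure V +
          ∫ x, iteratedFDeriv ℝ 2 V x ![∇ φ x, ∇ φ x] ∂gibbsMeasure V := by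
        simp only [hpoint]
        rw [integral_sub (integrable_finsetSum _ fun i _ => hint i) hint_hess,
          integral_finsetSum _ fun i _ => hint i]
        ring
    _ = _ := by
        simp only [integral_mul_generator hV₁ (hφ₁ _) (hφ' _) (hφc' _),
          real_inner_self_eq_norm_sq, Finset.sum_neg_distrib, neg_neg]
        rw [integral_finsetSum _ fun i _ => hint_grad i]

theorem le_integral_generator_sq {α : ℝ≥0∞ → ℝ≥0∞} {c : E → E → ℝ≥0∞}
    {V ρ : E → ℝ} [IsProbabilityMeasure (gibbsMeasure V)]
    (hV : ContDiff ℝ 2 V) (hρV : ∀ x u, ρ x * ‖u‖ ^ 2 ≤ iteratedFDeriv ℝ 2 V x ![u, u])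
    (h : TransportInformationInequality α c (gibbsMeasure V)) (hα : 0 < α ⊤)
    (hc : Measurable (uncurry c)) (hL : costLipNorm c ρ ≠ ⊤)
    (hA : legendreTransform α (costLipNorm c ρ) ≠ ⊤) (hρ : Integrable ρ (gibbsMeasure V))
    {φ : E → ℝ} (hφ : ContDiff ℝ 3 φ) (hφc : HasCompactSupport φ) :
    (∫ x, ρ x ∂gibbsMeasure V - (legendreTransform α (costLipNorm c ρ)).toReal) *
        ∫ x, ‖∇ φ x‖ ^ 2 ∂gibbsMeasure V ≤ ∫ x, generator V φ x ^ 2 ∂gibbsMeasure V := by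
  have hφ₁ : ContDiff ℝ 1 φ := hφ.of_le (by norm_num)
  have hgap := sub_mul_integral_sum_sq_le h hα hc hL hA hρ (a := fun i => ∂[i] φ)
    (fun i => contDiff_partialDeriv i hφ (by norm_num))
    (fun i => hasCompactSupport_partialDeriv i hφc)
  simp only [← norm_gradient_sq] at hgap
  have hρφ : Integrable (fun x => ρ x * ‖∇ φ x‖ ^ 2) (gibbsMeasure V) :=
    hρ.locallyIntegrable.integrable_smul_right_of_hasCompactSupport
      ((continuous_gradient hφ₁).norm.pow 2)
      ((hasCompactSupport_gradient hφc).mono fun x hx hfx => hx (by simp [hfx]))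
  refine hgap.trans ?_
  rw [integral_generator_sq hV hφ hφc]
  gcongr
  · exact integrable_iteratedFDeriv_two_gradient _ hV hφ₁ hφc
  · exact fun x => hρV x (∇ φ x)

/-! ### Caccioppoli inequality and mollification -/

theorem norm_sq_le_add_inner {F : Type*} [NormedAddCommGroup F] [InnerProductSpace ℝ F]
    (p q s : F) :
    ‖p‖ ^ 2 ≤ 10 * ‖q‖ ^ 2 + 4 * ‖s‖ ^ 2 + 2 * ⟪p - s, (2 : ℝ) • q + p⟫ := by
  have h₁ : 0 ≤ ‖p + (4 : ℝ) • q‖ ^ 2 := sq_nonneg _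
  have h₂ : 0 ≤ ‖p - (2 : ℝ) • s‖ ^ 2 := sq_nonneg _
  have h₃ : 0 ≤ ‖q - s‖ ^ 2 := sq_nonneg _
  simp only [norm_add_sq_real, norm_sub_sq_real, norm_smul, inner_smul_right, mul_pow,
    Real.norm_ofNat] at h₁ h₂ h₃
  rw [inner_add_right, inner_sub_left, inner_sub_left, inner_smul_right, inner_smul_right,
    real_inner_self_eq_norm_sq, real_inner_comm p s, real_inner_comm q s]
  linarith

/- Caccioppoli's inequality: the equation is tested with `ζ = χ² v`. -/
theorem integral_norm_smul_gradient_sq_le {μ : Measure E} [IsFiniteMeasureOnCompacts μ]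
    {v χ : E → ℝ} {r : E → E} (hv : ContDiff ℝ 1 v) (hr : Continuous r) (hχ : ContDiff ℝ 1 χ)
    (hχc : HasCompactSupport χ)
    (hvr : ∀ ζ : E → ℝ, ContDiff ℝ 1 ζ → HasCompactSupport ζ →
      ∫ x, ⟪∇ v x - r x, ∇ ζ x⟫ ∂μ = 0) :
    ∫ x, ‖χ x • ∇ v x‖ ^ 2 ∂μ ≤
      10 * ∫ x, ‖v x • ∇ χ x‖ ^ 2 ∂μ + 4 * ∫ x, ‖χ x • r x‖ ^ 2 ∂μ := by
  have hint_p : Integrable (fun x => ‖χ x • ∇ v x‖ ^ 2) μ :=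
    integrable_norm_sq_of_hasCompactSupport (hχ.continuous.smul (continuous_gradient hv))
      hχc.smul_right
  have hint_q : Integrable (fun x => ‖v x • ∇ χ x‖ ^ 2) μ :=
    integrable_norm_sq_of_hasCompactSupport (hv.continuous.smul (continuous_gradient hχ))
      (hasCompactSupport_gradient hχc).smul_left
  have hint_s : Integrable (fun x => ‖χ x • r x‖ ^ 2) μ :=
    integrable_norm_sq_of_hasCompactSupport (hχ.continuous.smul hr) hχc.smul_right
  have hint_qs : Integrable (fun x => 10 * ‖v x • ∇ χ x‖ ^ 2 + 4 * ‖χ x • r x‖ ^ 2) μ :=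
    (hint_q.const_mul _).add (hint_s.const_mul _)
  have hζ : ContDiff ℝ 1 fun x => χ x * (χ x * v x) := hχ.mul (hχ.mul hv)
  have hζc : HasCompactSupport fun x => χ x * (χ x * v x) := hχc.mul_right
  have hint_ζ : Integrable
      (fun x => ⟪∇ v x - r x, ∇ (fun x => χ x * (χ x * v x)) x⟫) μ :=
    (((continuous_gradient hv).sub hr).inner
      (continuous_gradient hζ)).integrable_of_hasCompactSupport
      ((hasCompactSupport_gradient hζc).mono fun x hx hζx => hx (by simp [hζx]))
  have hpoint (x : E) : ‖χ x • ∇ v x‖ ^ 2 ≤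
      10 * ‖v x • ∇ χ x‖ ^ 2 + 4 * ‖χ x • r x‖ ^ 2 +
        2 * ⟪∇ v x - r x, ∇ (fun x => χ x * (χ x * v x)) x⟫ := by
    have hχx : DifferentiableAt ℝ χ x := hχ.differentiable one_ne_zero x
    have hvx : DifferentiableAt ℝ v x := hv.differentiable one_ne_zero x
    have hgrad : ∇ (fun x => χ x * (χ x * v x)) x =
        χ x • ((2 : ℝ) • v x • ∇ χ x + χ x • ∇ v x) := by
      rw [gradient_mul hχx (hχx.fun_mul hvx), gradient_mul hχx hvx]
      module
    rw [hgrad, inner_smul_right, ← real_inner_smul_left, smul_sub]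
    exact norm_sq_le_add_inner _ _ _
  calc ∫ x, ‖χ x • ∇ v x‖ ^ 2 ∂μ
      ≤ ∫ x, (10 * ‖v x • ∇ χ x‖ ^ 2 + 4 * ‖χ x • r x‖ ^ 2 +
          2 * ⟪∇ v x - r x, ∇ (fun x => χ x * (χ x * v x)) x⟫) ∂μ :=
        integral_mono hint_p (hint_qs.add (hint_ζ.const_mul _)) hpoint
    _ = _ := by
        rw [integral_add hint_qs (hint_ζ.const_mul _),
          integral_add (hint_q.const_mul _) (hint_s.const_mul _), integral_const_mul,
          integral_const_mul, integral_const_mul, hvr _ hζ hζc, mul_zero, add_zero]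

section Convolution

theorem integrable_comp_sub_smul {F : Type*} [NormedAddCommGroup F] [NormedSpace ℝ F]
    {η : E → ℝ} {f : E → F} (hη : Continuous η) (hηc : HasCompactSupport η)
    (hf : LocallyIntegrable f) (x : E) : Integrable fun y => η (x - y) • f y :=
  hf.integrable_smul_left_of_hasCompactSupport (hη.comp (continuous_sub_left x))
    (hηc.comp_homeomorph (Homeomorph.subLeft x))

theorem partialDeriv_convolution {η f : E → ℝ} (i : Fin (Module.finrank ℝ E))
    (hη : ContDiff ℝ 1 η) (hηc : HasCompactSupport η) (hf : LocallyIntegrable f) :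
    ∂[i] (η ⋆ f) = ∂[i] η ⋆ f := by
  ext x
  rw [partialDeriv, (hηc.hasFDerivAt_convolution_left _ hη hf x).fderiv, convolution]
  exact ContinuousLinearMap.integral_apply ((hηc.fderiv ℝ).convolutionExists_left
    (ContinuousLinearMap.precompL E (ContinuousLinearMap.lsmul ℝ ℝ))
    (hη.continuous_fderiv one_ne_zero) hf x).integrable _

theorem contDiff_convolution {η f : E → ℝ} {k : ℕ∞} (hη : ContDiff ℝ k η)
    (hηc : HasCompactSupport η) (hf : LocallyIntegrable f) : ContDiff ℝ k (η ⋆ f) :=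
  hηc.contDiff_convolution_left _ hη hf

/- Tests the equation for `w` with the translates `y ↦ η (x - y)`. -/
theorem sum_partialDeriv_convolution_eq_zero {V w η : E → ℝ} (hV : ContDiff ℝ 1 V)
    (hw : LocallyIntegrable w) (hη : ContDiff ℝ ∞ η) (hηc : HasCompactSupport η)
    (horth : ∀ φ : E → ℝ, ContDiff ℝ ∞ φ → HasCompactSupport φ →
      ∫ y, w y * generator V φ y = 0) (x : E) :
    ∑ i, ∂[i] (fun y => ∂[i] (η ⋆ w) y + (η ⋆ fun z => w z * ∂[i] V z) y) x = 0 := by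
  have hη₁ : ContDiff ℝ 1 η := hη.of_le (by simp)
  have hη₂ : ContDiff ℝ 2 η := contDiff_infty.mp hη 2
  have hη' (i) : ContDiff ℝ ∞ (∂[i] η) := contDiff_partialDeriv i hη (by simp)
  have hηc' (i) : HasCompactSupport (∂[i] η) := hasCompactSupport_partialDeriv i hηc
  have hwV (i) : LocallyIntegrable fun z => w z * ∂[i] V z :=
    hw.mul_continuous (continuous_partialDeriv i hV)
  have hφ : ContDiff ℝ ∞ fun y => η (x - y) := by fun_prop
  have hint₁ (i) : Integrable fun y => ∂[i] (∂[i] η) (x - y) * w y :=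
    integrable_comp_sub_smul (continuous_partialDeriv i ((hη' i).of_le (by simp)))
      (hasCompactSupport_partialDeriv i (hηc' i)) hw x
  have hint₂ (i) : Integrable fun y => ∂[i] η (x - y) * (w y * ∂[i] V y) :=
    integrable_comp_sub_smul (hη' i).continuous (hηc' i) (hwV i) x
  have hterm (i) : ∂[i] (fun y => ∂[i] (η ⋆ w) y + (η ⋆ fun z => w z * ∂[i] V z) y) x =
      ∫ y, (∂[i] (∂[i] η) (x - y) * w y + ∂[i] η (x - y) * (w y * ∂[i] V y)) := by
    rw [partialDeriv_convolution i hη₁ hηc hw, partialDeriv, fderiv_fun_add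
      ((contDiff_convolution ((hη' i).of_le (by simp)) (hηc' i) hw).differentiable one_ne_zero x)
      ((contDiff_convolution hη₁ hηc (hwV i)).differentiable one_ne_zero x)]
    change ∂[i] (∂[i] η ⋆ w) x + ∂[i] (η ⋆ fun z => w z * ∂[i] V z) x = _
    rw [partialDeriv_convolution i ((hη' i).of_le (by simp)) (hηc' i) hw,
      partialDeriv_convolution i hη₁ hηc (hwV i), convolution_lsmul_swap, convolution_lsmul_swap]
    exact (integral_add (hint₁ i) (hint₂ i)).symm
  simp only [hterm]
  rw [← integral_finsetSum _ fun i _ => (hint₁ i).fun_add (hint₂ i),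
    ← horth _ hφ (hηc.comp_homeomorph (Homeomorph.subLeft x))]
  congr with y
  rw [generator_eq_sum (contDiff_infty.mp hφ 2), Finset.mul_sum]
  refine Finset.sum_congr rfl fun i _ => ?_
  rw [partialDeriv_partialDeriv_comp_sub i hη₂,
    partialDeriv_comp_sub i (hη₁.differentiable one_ne_zero)]
  ring

/-- The mollification `v = e^V (η ⋆ (e^{-V} u))` of `u`, conjugated by the density `e^{-V}`. -/
noncomputable def gibbsMollify (V η u : E → ℝ) (x : E) : ℝ :=
  exp (V x) * (η ⋆ fun y => u y * exp (-V y)) x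

/-- The defect of commutation of `gibbsMollify` with the equation `L u = 0`: if `u` solves it
weakly, then `v = gibbsMollify V η u` satisfies `div (e^{-V} ∇v) = div (e^{-V} r)` for
`r = gibbsCommutator V η u`. -/
noncomputable def gibbsCommutator (V η u : E → ℝ) (x : E) : E :=
  exp (V x) • ∫ y, η (x - y) • (u y * exp (-V y)) • (∇ V x - ∇ V y)

variable {V η u : E → ℝ}

theorem contDiff_gibbsMollify (hV : ContDiff ℝ 1 V)
    (hu : LocallyIntegrable fun y => u y * exp (-V y)) (hη : ContDiff ℝ 1 η)
    (hηc : HasCompactSupport η) : ContDiff ℝ 1 (gibbsMollify V η u) :=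
  hV.exp.mul (contDiff_convolution hη hηc hu)

theorem partialDeriv_gibbsMollify (i : Fin (Module.finrank ℝ E)) (hV : ContDiff ℝ 1 V)
    (hu : LocallyIntegrable fun y => u y * exp (-V y)) (hη : ContDiff ℝ 1 η)
    (hηc : HasCompactSupport η) (x : E) :
    ∂[i] (gibbsMollify V η u) x = exp (V x) *
      (∂[i] (η ⋆ fun y => u y * exp (-V y)) x +
        ∂[i] V x * (η ⋆ fun y => u y * exp (-V y)) x) := by
  have hexp : ∂[i] (fun y => exp (V y)) x = exp (V x) * ∂[i] V x := by
    simp [partialDeriv, fderiv_exp (hV.differentiable one_ne_zero x)]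
  rw [show gibbsMollify V η u = fun y => exp (V y) * _ from rfl,
    partialDeriv_mul i (hV.exp.differentiable one_ne_zero x)
      ((contDiff_convolution hη hηc hu).differentiable one_ne_zero x), hexp]
  ring

theorem inner_gibbsCommutator (i : Fin (Module.finrank ℝ E)) (hV : ContDiff ℝ 1 V)
    (hu : LocallyIntegrable fun y => u y * exp (-V y)) (hη : Continuous η)
    (hηc : HasCompactSupport η) (x : E) :
    ⟪stdOrthonormalBasis ℝ E i, gibbsCommutator V η u x⟫ = exp (V x) *
      (∂[i] V x * (η ⋆ fun y => u y * exp (-V y)) x -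
        (η ⋆ fun y => u y * exp (-V y) * ∂[i] V y) x) := by
  have hint : Integrable fun y => η (x - y) • (u y * exp (-V y)) • (∇ V x - ∇ V y) :=
    integrable_comp_sub_smul hη hηc (hu.smul_continuous
      (continuous_const.sub (continuous_gradient hV))) x
  have hint₁ : Integrable fun y => η (x - y) * (u y * exp (-V y)) :=
    integrable_comp_sub_smul hη hηc hu x
  have hint₂ : Integrable fun y => η (x - y) * (u y * exp (-V y) * ∂[i] V y) :=
    integrable_comp_sub_smul hη hηc (hu.mul_continuous (continuous_partialDeriv i hV)) x
  rw [gibbsCommutator, inner_smul_right, ← integral_inner hint, convolution_lsmul_swap,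
    convolution_lsmul_swap]
  simp only [smul_eq_mul]
  rw [← integral_const_mul (∂[i] V x), ← integral_sub (hint₁.const_mul _) hint₂]
  congr with y
  simp only [inner_smul_right, inner_sub_right, inner_stdOrthonormalBasis_gradient]
  ring

theorem continuous_gibbsCommutator (hV : ContDiff ℝ 1 V)
    (hu : LocallyIntegrable fun y => u y * exp (-V y)) (hη : Continuous η)
    (hηc : HasCompactSupport η) : Continuous (gibbsCommutator V η u) := by
  have hconv {f : E → ℝ} (hf : LocallyIntegrable f) : Continuous (η ⋆ f) :=
    hηc.continuous_convolution_left _ hη hf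
  have hcoord : gibbsCommutator V η u = fun x => ∑ i,
      ⟪stdOrthonormalBasis ℝ E i, gibbsCommutator V η u x⟫ • stdOrthonormalBasis ℝ E i :=
    funext fun x => ((stdOrthonormalBasis ℝ E).sum_repr' _).symm
  rw [hcoord]
  simp only [inner_gibbsCommutator _ hV hu hη hηc]
  exact continuous_finsetSum _ fun i _ => (hV.continuous.rexp.mul
    (((continuous_partialDeriv i hV).mul (hconv hu)).sub
      (hconv (hu.mul_continuous (continuous_partialDeriv i hV))))).smul continuous_const

theorem integral_inner_gradient_gibbsMollify_sub {ζ : E → ℝ} (hV : ContDiff ℝ 1 V)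
    (hu : LocallyIntegrable fun y => u y * exp (-V y)) (hη : ContDiff ℝ ∞ η)
    (hηc : HasCompactSupport η)
    (hLu : ∀ φ : E → ℝ, ContDiff ℝ ∞ φ → HasCompactSupport φ →
      ∫ y, u y * exp (-V y) * generator V φ y = 0)
    (hζ : ContDiff ℝ 1 ζ) (hζc : HasCompactSupport ζ) :
    ∫ x, ⟪∇ (gibbsMollify V η u) x - gibbsCommutator V η u x, ∇ ζ x⟫ ∂gibbsMeasure V = 0 := by
  have hη₁ : ContDiff ℝ 1 η := hη.of_le (by simp)
  set flux : Fin (Module.finrank ℝ E) → E → ℝ := fun i x =>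
    ∂[i] (η ⋆ fun y => u y * exp (-V y)) x + (η ⋆ fun y => u y * exp (-V y) * ∂[i] V y) x
  have hflux (i) : ContDiff ℝ 1 (flux i) :=
    (contDiff_partialDeriv i (contDiff_convolution (mod_cast contDiff_infty.mp hη 2) hηc hu)
      le_rfl).add
    (contDiff_convolution hη₁ hηc (hu.mul_continuous (continuous_partialDeriv i hV)))
  have hcoord (x : E) :
      ⟪∇ (gibbsMollify V η u) x - gibbsCommutator V η u x, ∇ ζ x⟫ * exp (-V x) =
        ∑ i, flux i x * ∂[i] ζ x := by
    rw [← (stdOrthonormalBasis ℝ E).sum_inner_mul_inner, Finset.sum_mul]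
    refine Finset.sum_congr rfl fun i _ => ?_
    rw [real_inner_comm, inner_sub_right, inner_stdOrthonormalBasis_gradient,
      inner_stdOrthonormalBasis_gradient, partialDeriv_gibbsMollify i hV hu hη₁ hηc,
      inner_gibbsCommutator i hV hu hη.continuous hηc, exp_neg]
    field_simp
    ring
  have hdiv (x : E) : ∑ i, ∂[i] (flux i) x * ζ x = 0 := by
    rw [← Finset.sum_mul, sum_partialDeriv_convolution_eq_zero hV hu hη hηc hLu, zero_mul]
  have hint (i) : Integrable fun x => flux i x * ∂[i] ζ x :=
    ((hflux i).continuous.mul (continuous_partialDeriv i hζ)).integrable_of_hasCompactSupport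
      (hasCompactSupport_partialDeriv i hζc).mul_left
  have hint' (i) : Integrable fun x => ∂[i] (flux i) x * ζ x :=
    ((continuous_partialDeriv i (hflux i)).mul
      hζ.continuous).integrable_of_hasCompactSupport hζc.mul_left
  simp only [integral_gibbsMeasure, hcoord]
  rw [integral_finsetSum _ fun i _ => hint i]
  simp only [integral_mul_partialDeriv _ (hflux _) hζ hζc, Finset.sum_neg_distrib]
  rw [← integral_finsetSum _ fun i _ => hint' i]
  simp only [hdiv, integral_zero, neg_zero, mul_zero]

end Convolution

/- Expand `0 ≤ ∫ p ‖f - m‖²` with `m = ∫ p f`. -/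
theorem norm_integral_smul_sq_le {X F : Type*} [MeasurableSpace X] [NormedAddCommGroup F]
    [InnerProductSpace ℝ F] [CompleteSpace F] {ν : Measure X} {p : X → ℝ} {f : X → F}
    (hp : ∀ x, 0 ≤ p x) (hp₁ : ∫ x, p x ∂ν = 1) (hf : Integrable (fun x => p x • f x) ν)
    (hf₂ : Integrable (fun x => p x * ‖f x‖ ^ 2) ν) :
    ‖∫ x, p x • f x ∂ν‖ ^ 2 ≤ ∫ x, p x * ‖f x‖ ^ 2 ∂ν := by
  set m := ∫ x, p x • f x ∂ν with hm
  have hp_int : Integrable p ν := by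
    by_contra h
    simp [integral_undef h] at hp₁
  have hexpand (x : X) : p x * ‖f x - m‖ ^ 2 =
      p x * ‖f x‖ ^ 2 + p x * ‖m‖ ^ 2 - 2 * ⟪m, p x • f x⟫ := by
    rw [norm_sub_sq_real, inner_smul_right, real_inner_comm]
    ring
  have hvar : 0 ≤ ∫ x, p x * ‖f x - m‖ ^ 2 ∂ν :=
    integral_nonneg fun x => mul_nonneg (hp x) (sq_nonneg _)
  simp only [hexpand] at hvar
  have hinner : Integrable (fun x => 2 * ⟪m, p x • f x⟫) ν := (hf.const_inner m).const_mul 2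
  rw [integral_sub (hf₂.fun_add (hp_int.mul_const _)) hinner,
    integral_add hf₂ (hp_int.mul_const _), integral_const_mul, integral_inner hf, ← hm,
    real_inner_self_eq_norm_sq, integral_mul_const, hp₁] at hvar
  linarith

theorem integrable_gibbsMeasure_iff {V f : E → ℝ} (hV : Integrable fun x => exp (-V x)) :
    Integrable f (gibbsMeasure V) ↔ Integrable fun x => f x * exp (-V x) := by
  simp only [gibbsMeasure, integrable_tilted_iff hV, smul_eq_mul, mul_comm]

/-- A smooth, compactly supported probability density on `E`, against which functions are
convolved. -/
structure IsMollifier (η : E → ℝ) : Prop where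
  contDiff : ContDiff ℝ ∞ η
  hasCompactSupport : HasCompactSupport η
  nonneg (x : E) : 0 ≤ η x
  integral_eq_one : ∫ x, η x = 1

theorem exp_mul_norm_smul_sq_le {F : Type*} [NormedAddCommGroup F] [NormedSpace ℝ F]
    {a b p t δ : ℝ} {z : F} (hp : 0 ≤ p) (hab : p ≠ 0 → exp (a - b) ≤ 2) (hz : p ≠ 0 → ‖z‖ ≤ δ) :
    exp a * (p * ‖(t * exp (-b)) • z‖ ^ 2) ≤ 2 * δ ^ 2 * (p * (t ^ 2 * exp (-b))) := by
  by_cases hp₀ : p = 0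
  · simp [hp₀]
  calc exp a * (p * ‖(t * exp (-b)) • z‖ ^ 2)
      = exp (a - b) * ‖z‖ ^ 2 * (p * (t ^ 2 * exp (-b))) := by
        rw [sub_eq_add_neg, exp_add, norm_smul, mul_pow, Real.norm_eq_abs, sq_abs]
        ring
    _ ≤ 2 * δ ^ 2 * (p * (t ^ 2 * exp (-b))) := by
        gcongr
        exacts [hab hp₀, hz hp₀]

theorem norm_exp_smul_integral_sq_mul_exp_neg_le {F : Type*} [NormedAddCommGroup F]
    [InnerProductSpace ℝ F] [CompleteSpace F] {V η u : E → ℝ} {g : E → F} {δ : ℝ} {x : E}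
    (hV : Continuous V) (hη : IsMollifier η) (hu : LocallyIntegrable fun y => u y * exp (-V y))
    (hu₂ : LocallyIntegrable fun y => u y ^ 2 * exp (-V y)) (hg : Continuous g)
    (hVx : ∀ y, η (x - y) ≠ 0 → exp (V x - V y) ≤ 2) (hgδ : ∀ y, η (x - y) ≠ 0 → ‖g y‖ ≤ δ) :
    ‖exp (V x) • ∫ y, η (x - y) • (u y * exp (-V y)) • g y‖ ^ 2 * exp (-V x) ≤
      2 * δ ^ 2 * (η ⋆ fun y => u y ^ 2 * exp (-V y)) x := by
  have hηc := hη.contDiff.continuous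
  have hint : Integrable fun y => η (x - y) * (u y ^ 2 * exp (-V y)) :=
    integrable_comp_sub_smul hηc hη.hasCompactSupport hu₂ x
  have hint_g : Integrable fun y => η (x - y) * ‖(u y * exp (-V y)) • g y‖ ^ 2 := by
    have hcont : Continuous fun y => exp (-V y) * ‖g y‖ ^ 2 := by fun_prop
    refine (integrable_comp_sub_smul hηc hη.hasCompactSupport
      (hu₂.mul_continuous hcont) x).congr (.of_forall fun y => ?_)
    simp only [norm_smul, mul_pow, Real.norm_eq_abs, sq_abs, smul_eq_mul]
    ring
  have hjensen := norm_integral_smul_sq_le (fun y => hη.nonneg (x - y))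
    ((integral_sub_left_eq_self η volume x).trans hη.integral_eq_one)
    (integrable_comp_sub_smul hηc hη.hasCompactSupport (hu.smul_continuous hg) x) hint_g
  calc ‖exp (V x) • ∫ y, η (x - y) • (u y * exp (-V y)) • g y‖ ^ 2 * exp (-V x)
      = exp (V x) * ‖∫ y, η (x - y) • (u y * exp (-V y)) • g y‖ ^ 2 := by
        rw [norm_smul, mul_pow, Real.norm_eq_abs, abs_exp, exp_neg]
        field_simp
    _ ≤ ∫ y, exp (V x) * (η (x - y) * ‖(u y * exp (-V y)) • g y‖ ^ 2) := by
        rw [integral_const_mul]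
        gcongr
    _ ≤ ∫ y, 2 * δ ^ 2 * (η (x - y) * (u y ^ 2 * exp (-V y))) :=
        integral_mono (hint_g.const_mul _) (hint.const_mul _) fun y =>
          exp_mul_norm_smul_sq_le (hη.nonneg _) (hVx y) (hgδ y)
    _ = 2 * δ ^ 2 * (η ⋆ fun y => u y ^ 2 * exp (-V y)) x := by
        rw [integral_const_mul, convolution_lsmul_swap]
        simp only [smul_eq_mul]

theorem sq_gibbsMollify_mul_exp_neg_le {V η u : E → ℝ} {x : E} (hV : Continuous V)
    (hη : IsMollifier η) (hu : LocallyIntegrable fun y => u y * exp (-V y))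
    (hu₂ : LocallyIntegrable fun y => u y ^ 2 * exp (-V y))
    (hVx : ∀ y, η (x - y) ≠ 0 → exp (V x - V y) ≤ 2) :
    gibbsMollify V η u x ^ 2 * exp (-V x) ≤ 2 * (η ⋆ fun y => u y ^ 2 * exp (-V y)) x := by
  simpa [gibbsMollify, convolution_lsmul_swap, mul_pow] using
    norm_exp_smul_integral_sq_mul_exp_neg_le hV hη hu hu₂ (g := fun _ => (1 : ℝ)) (δ := 1)
      continuous_const hVx (by simp)

theorem integral_norm_sq_gibbsMeasure_le {F : Type*} [NormedAddCommGroup F] {V η u : E → ℝ}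
    {h : E → F} {C : ℝ} (hη : IsMollifier η) (hu₂ : Integrable fun y => u y ^ 2 * exp (-V y))
    (hh : ∀ x, ‖h x‖ ^ 2 * exp (-V x) ≤ C * (η ⋆ fun y => u y ^ 2 * exp (-V y)) x) :
    ∫ x, ‖h x‖ ^ 2 ∂gibbsMeasure V ≤ C * ∫ x, u x ^ 2 ∂gibbsMeasure V := by
  have hη_int : Integrable η :=
    hη.contDiff.continuous.integrable_of_hasCompactSupport hη.hasCompactSupport
  have hconv : ∫ x, (η ⋆ fun y => u y ^ 2 * exp (-V y)) x = ∫ x, u x ^ 2 * exp (-V x) := by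
    rw [integral_convolution _ hη_int hu₂, hη.integral_eq_one]
    simp
  have hle : ∫ x, ‖h x‖ ^ 2 * exp (-V x) ≤ C * ∫ x, u x ^ 2 * exp (-V x) := by
    rw [← hconv, ← integral_const_mul]
    exact integral_mono_of_nonneg (.of_forall fun x => by positivity)
      ((hη_int.integrable_convolution _ hu₂).const_mul _) (.of_forall hh)
  rw [integral_gibbsMeasure, integral_gibbsMeasure, mul_left_comm]
  have : 0 ≤ ∫ x, exp (-V x) := integral_nonneg fun x => (exp_pos _).le
  gcongr

theorem norm_smul_gradient_sq_mul_exp_neg_le {V η u χ : E → ℝ} {δ : ℝ} {x : E}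
    (hV : Continuous V) (hη : IsMollifier η) (hu : LocallyIntegrable fun y => u y * exp (-V y))
    (hu₂ : LocallyIntegrable fun y => u y ^ 2 * exp (-V y)) (hχδ : ‖∇ χ x‖ ≤ δ)
    (hVχ : x ∈ tsupport χ → ∀ y, η (x - y) ≠ 0 → exp (V x - V y) ≤ 2) :
    ‖gibbsMollify V η u x • ∇ χ x‖ ^ 2 * exp (-V x) ≤
      2 * δ ^ 2 * (η ⋆ fun y => u y ^ 2 * exp (-V y)) x := by
  have hconv : 0 ≤ (η ⋆ fun y => u y ^ 2 * exp (-V y)) x :=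
    integral_nonneg fun y => mul_nonneg (hη.nonneg y) (by positivity)
  by_cases hx : x ∈ tsupport χ
  · have := sq_gibbsMollify_mul_exp_neg_le hV hη hu hu₂ (hVχ hx)
    calc ‖gibbsMollify V η u x • ∇ χ x‖ ^ 2 * exp (-V x)
        = ‖∇ χ x‖ ^ 2 * (gibbsMollify V η u x ^ 2 * exp (-V x)) := by
          rw [norm_smul, mul_pow, Real.norm_eq_abs, sq_abs]
          ring
      _ ≤ δ ^ 2 * (2 * (η ⋆ fun y => u y ^ 2 * exp (-V y)) x) := by gcongr
      _ = 2 * δ ^ 2 * (η ⋆ fun y => u y ^ 2 * exp (-V y)) x := by ring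
  · rw [gradient, fderiv_of_notMem_tsupport ℝ hx, map_zero, smul_zero, norm_zero]
    nlinarith [mul_nonneg (sq_nonneg δ) hconv]

theorem norm_smul_gibbsCommutator_sq_mul_exp_neg_le {V η u χ : E → ℝ} {δ : ℝ} {x : E}
    (hV : ContDiff ℝ 1 V) (hη : IsMollifier η)
    (hu : LocallyIntegrable fun y => u y * exp (-V y))
    (hu₂ : LocallyIntegrable fun y => u y ^ 2 * exp (-V y)) (hχ₁ : |χ x| ≤ 1)
    (hVχ : x ∈ tsupport χ → ∀ y, η (x - y) ≠ 0 → exp (V x - V y) ≤ 2)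
    (hVδ : x ∈ tsupport χ → ∀ y, η (x - y) ≠ 0 → ‖∇ V x - ∇ V y‖ ≤ δ) :
    ‖χ x • gibbsCommutator V η u x‖ ^ 2 * exp (-V x) ≤
      2 * δ ^ 2 * (η ⋆ fun y => u y ^ 2 * exp (-V y)) x := by
  by_cases hx : x ∈ tsupport χ
  · have hle : ‖χ x • gibbsCommutator V η u x‖ ≤ ‖gibbsCommutator V η u x‖ := by
      rw [norm_smul]
      exact mul_le_of_le_one_left (norm_nonneg _) hχ₁
    calc ‖χ x • gibbsCommutator V η u x‖ ^ 2 * exp (-V x)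
        ≤ ‖gibbsCommutator V η u x‖ ^ 2 * exp (-V x) := by gcongr
      _ ≤ _ := norm_exp_smul_integral_sq_mul_exp_neg_le hV.continuous hη hu hu₂
          (continuous_const.sub (continuous_gradient hV)) (hVχ hx) (hVδ hx)
  · have hconv : 0 ≤ (η ⋆ fun y => u y ^ 2 * exp (-V y)) x :=
      integral_nonneg fun y => mul_nonneg (hη.nonneg y) (by positivity)
    rw [image_eq_zero_of_notMem_tsupport hx, zero_smul, norm_zero]
    nlinarith [mul_nonneg (sq_nonneg δ) hconv]

theorem integral_norm_smul_gradient_gibbsMollify_sq_le {V η u χ : E → ℝ} {δ : ℝ}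
    (hV : ContDiff ℝ 1 V) (hη : IsMollifier η)
    (hu : LocallyIntegrable fun y => u y * exp (-V y))
    (hu₂ : Integrable fun y => u y ^ 2 * exp (-V y))
    (hLu : ∀ φ : E → ℝ, ContDiff ℝ ∞ φ → HasCompactSupport φ →
      ∫ y, u y * exp (-V y) * generator V φ y = 0)
    (hχ : ContDiff ℝ 1 χ) (hχc : HasCompactSupport χ) (hχ₁ : ∀ x, |χ x| ≤ 1)
    (hχδ : ∀ x, ‖∇ χ x‖ ≤ δ)
    (hVχ : ∀ x ∈ tsupport χ, ∀ y, η (x - y) ≠ 0 → exp (V x - V y) ≤ 2)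
    (hVδ : ∀ x ∈ tsupport χ, ∀ y, η (x - y) ≠ 0 → ‖∇ V x - ∇ V y‖ ≤ δ) :
    ∫ x, ‖χ x • ∇ (gibbsMollify V η u) x‖ ^ 2 ∂gibbsMeasure V ≤
      28 * δ ^ 2 * ∫ x, u x ^ 2 ∂gibbsMeasure V := by
  have hη₁ : ContDiff ℝ 1 η := hη.contDiff.of_le (by simp)
  have hq := integral_norm_sq_gibbsMeasure_le hη hu₂ fun x =>
    norm_smul_gradient_sq_mul_exp_neg_le hV.continuous hη hu hu₂.locallyIntegrable (hχδ x)
      (hVχ x)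
  have hs := integral_norm_sq_gibbsMeasure_le hη hu₂ fun x =>
    norm_smul_gibbsCommutator_sq_mul_exp_neg_le hV hη hu hu₂.locallyIntegrable (hχ₁ x)
      (hVχ x) (hVδ x)
  have hcacc := integral_norm_smul_gradient_sq_le (contDiff_gibbsMollify hV hu hη₁
    hη.hasCompactSupport) (continuous_gibbsCommutator hV hu hη₁.continuous hη.hasCompactSupport)
    hχ hχc fun ζ hζ hζc => integral_inner_gradient_gibbsMollify_sub hV hu hη.contDiff
      hη.hasCompactSupport hLu hζ hζc
  linarith

theorem setIntegral_norm_gradient_le {V v χ : E → ℝ} {K : Set E} {δ : ℝ} (hV : Continuous V)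
    (hv : ContDiff ℝ 1 v) (hχ : Continuous χ) (hχc : HasCompactSupport χ) (hK : IsCompact K)
    (hχK : ∀ x ∈ K, χ x = 1) (hδ : 0 < δ) :
    ∫ x in K, ‖∇ v x‖ ≤
      (δ⁻¹ * ∫ x, ‖χ x • ∇ v x‖ ^ 2 * exp (-V x)) + δ * ∫ x in K, exp (V x) := by
  have hint : Integrable fun x => ‖χ x • ∇ v x‖ ^ 2 * exp (-V x) := by
    have := continuous_gradient hv
    exact Continuous.integrable_of_hasCompactSupport (by fun_prop)
      (hχc.mono fun x hx hχx => hx (by simp [hχx]))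
  have hint_exp : IntegrableOn (fun x => exp (V x)) K :=
    hV.rexp.continuousOn.integrableOn_compact hK
  have hyoung (x : E) (hx : x ∈ K) :
      ‖∇ v x‖ ≤ δ⁻¹ * (‖χ x • ∇ v x‖ ^ 2 * exp (-V x)) + δ * exp (V x) := by
    have hsq : 0 ≤ δ⁻¹ * exp (-V x) *
        ((‖∇ v x‖ - δ * exp (V x)) ^ 2 + ‖∇ v x‖ * (δ * exp (V x))) := by positivity
    rw [hχK x hx, one_smul]
    rw [exp_neg] at hsq ⊢
    field_simp at hsq ⊢
    linarith
  calc ∫ x in K, ‖∇ v x‖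
      ≤ ∫ x in K, (δ⁻¹ * (‖χ x • ∇ v x‖ ^ 2 * exp (-V x)) + δ * exp (V x)) :=
        setIntegral_mono_on ((continuous_gradient hv).norm.continuousOn.integrableOn_compact hK)
          ((hint.integrableOn.const_mul _).fun_add (hint_exp.const_mul _)) hK.measurableSet hyoung
    _ = (δ⁻¹ * ∫ x in K, ‖χ x • ∇ v x‖ ^ 2 * exp (-V x)) + δ * ∫ x in K, exp (V x) := by
        rw [integral_add (hint.integrableOn.const_mul _) (hint_exp.const_mul _),
          integral_const_mul, integral_const_mul]
    _ ≤ (δ⁻¹ * ∫ x, ‖χ x • ∇ v x‖ ^ 2 * exp (-V x)) + δ * ∫ x in K, exp (V x) := by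
        gcongr ?_ * ?_ + _
        exact setIntegral_le_integral hint (.of_forall fun x => by positivity)

theorem exists_setIntegral_norm_gradient_gibbsMollify_le {V u : E → ℝ} {K : Set E} {δ : ℝ}
    (hV : ContDiff ℝ 1 V) (hV_int : Integrable fun x => exp (-V x))
    (hu : LocallyIntegrable fun y => u y * exp (-V y))
    (hu₂ : Integrable fun y => u y ^ 2 * exp (-V y))
    (hLu : ∀ φ : E → ℝ, ContDiff ℝ ∞ φ → HasCompactSupport φ →
      ∫ y, u y * exp (-V y) * generator V φ y = 0)
    (hK : IsCompact K) (hδ : 0 < δ) :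
    ∃ ε > 0, ∀ η, IsMollifier η → support η ⊆ Metric.ball 0 ε →
      ∫ x in K, ‖∇ (gibbsMollify V η u) x‖ ≤ δ := by
  set U := ∫ x, u x ^ 2 * exp (-V x)
  set W := ∫ x in K, exp (V x)
  have : 0 ≤ U := integral_nonneg fun x => by positivity
  have : 0 ≤ W := integral_nonneg fun x => (exp_pos _).le
  set δ' := δ / (28 * U + W + 1)
  have hδ' : 0 < δ' := by positivity
  obtain ⟨χ, hχ, hχc, hχ₁, hχK, hχδ⟩ := exists_contDiff_eqOn_one_norm_gradient_le hK hδ'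
  obtain ⟨ε, hε, hVε⟩ := exists_forall_norm_sub_lt_exp_sub_le hV hχc.isCompact hδ'
  refine ⟨ε, hε, fun η hη hηε => ?_⟩
  have hclose (x y : E) (hxy : η (x - y) ≠ 0) : ‖x - y‖ < ε :=
    mem_ball_zero_iff.mp (hηε hxy)
  have henergy := integral_norm_smul_gradient_gibbsMollify_sq_le hV hη hu hu₂ hLu hχ hχc hχ₁ hχδ
    (fun x hx y hxy => (hVε x hx y (hclose x y hxy)).1)
    (fun x hx y hxy => (hVε x hx y (hclose x y hxy)).2)
  rw [integral_gibbsMeasure, integral_gibbsMeasure, mul_left_comm,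
    mul_le_mul_iff_right₀ (inv_pos.mpr (integral_exp_pos hV_int))] at henergy
  calc ∫ x in K, ‖∇ (gibbsMollify V η u) x‖
      ≤ (δ'⁻¹ * ∫ x, ‖χ x • ∇ (gibbsMollify V η u) x‖ ^ 2 * exp (-V x)) + δ' * W :=
        setIntegral_norm_gradient_le hV.continuous (contDiff_gibbsMollify hV hu
          (hη.contDiff.of_le (by simp)) hη.hasCompactSupport) hχ.continuous hχc hK hχK hδ'
    _ ≤ δ'⁻¹ * (28 * δ' ^ 2 * U) + δ' * W := by gcongr
    _ = δ' * (28 * U + W) := by field_simp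
    _ ≤ δ' * (28 * U + W + 1) := mul_le_mul_of_nonneg_left (by linarith) hδ'.le
    _ = δ := div_mul_cancel₀ _ (by positivity)

/-! ### Liouville property -/

theorem enorm_add_sub_le_lintegral {X F : Type*} [NormedAddCommGroup X] [NormedSpace ℝ X]
    [NormedAddCommGroup F] [NormedSpace ℝ F] [CompleteSpace F] {v : X → F} (hv : ContDiff ℝ 1 v)
    (x h : X) :
    ‖v (x + h) - v x‖ₑ ≤ ‖h‖ₑ * ∫⁻ t in Icc (0 : ℝ) 1, ‖fderiv ℝ v (x + t • h)‖ₑ := by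
  have hderiv (t : ℝ) : HasDerivAt (fun s : ℝ => v (x + s • h)) (fderiv ℝ v (x + t • h) h) t := by
    have hline : HasDerivAt (fun s : ℝ => x + s • h) h t := by
      simpa using ((hasDerivAt_id t).smul_const h).const_add x
    exact (hv.differentiable one_ne_zero _).hasFDerivAt.comp_hasDerivAt t hline
  have hcont : Continuous fun t : ℝ => fderiv ℝ v (x + t • h) :=
    (hv.continuous_fderiv one_ne_zero).comp (by fun_prop)
  have hftc : v (x + h) - v x = ∫ t in Icc (0 : ℝ) 1, fderiv ℝ v (x + t • h) h := by
    rw [integral_Icc_eq_integral_Ioc, ← intervalIntegral.integral_of_le zero_le_one,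
      intervalIntegral.integral_eq_sub_of_hasDerivAt (fun t _ => hderiv t)
        ((hcont.clm_apply continuous_const).intervalIntegrable _ _)]
    simp
  rw [hftc, ← lintegral_const_mul _ hcont.enorm.measurable]
  refine (enorm_integral_le_lintegral_enorm _).trans (lintegral_mono fun t => ?_)
  rw [mul_comm]
  exact ContinuousLinearMap.le_opENorm _ _

theorem lintegral_ball_enorm_add_sub_le {v : E → ℝ} (hv : ContDiff ℝ 1 v) (h : E) (R : ℝ) :
    ∫⁻ x in Metric.ball 0 R, ‖v (x + h) - v x‖ₑ ≤
      ‖h‖ₑ * ∫⁻ x in Metric.ball 0 (R + ‖h‖), ‖fderiv ℝ v x‖ₑ := by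
  have hcont : Continuous fun p : E × ℝ => ‖fderiv ℝ v (p.1 + p.2 • h)‖ₑ :=
    ((hv.continuous_fderiv one_ne_zero).comp (by fun_prop)).enorm
  have hslice (t : ℝ) (ht : t ∈ Icc (0 : ℝ) 1) :
      ∫⁻ x in Metric.ball 0 R, ‖fderiv ℝ v (x + t • h)‖ₑ ≤
        ∫⁻ x in Metric.ball 0 (R + ‖h‖), ‖fderiv ℝ v x‖ₑ := by
    have hsubset : Metric.ball 0 R ⊆ (· + t • h) ⁻¹' Metric.ball (0 : E) (R + ‖h‖) := by
      intro x hx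
      rw [mem_ball_zero_iff] at hx
      rw [mem_preimage, mem_ball_zero_iff]
      have hth : ‖t • h‖ ≤ ‖h‖ := by
        rw [norm_smul, Real.norm_of_nonneg ht.1]
        exact mul_le_of_le_one_left (norm_nonneg _) ht.2
      linarith [norm_add_le x (t • h)]
    refine (lintegral_mono_set hsubset).trans_eq ?_
    exact (measurePreserving_add_right volume (t • h)).setLIntegral_comp_preimage_emb
      (measurableEmbedding_addRight _) (fun x => ‖fderiv ℝ v x‖ₑ) _
  calc ∫⁻ x in Metric.ball 0 R, ‖v (x + h) - v x‖ₑ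
      ≤ ∫⁻ x in Metric.ball 0 R,
          ‖h‖ₑ * ∫⁻ t in Icc (0 : ℝ) 1, ‖fderiv ℝ v (x + t • h)‖ₑ :=
        lintegral_mono fun x => enorm_add_sub_le_lintegral hv x h
    _ = ‖h‖ₑ * ∫⁻ t in Icc (0 : ℝ) 1,
          ∫⁻ x in Metric.ball 0 R, ‖fderiv ℝ v (x + t • h)‖ₑ := by
        rw [lintegral_const_mul _ hcont.measurable.lintegral_prod_right',
          lintegral_lintegral_swap hcont.measurable.aemeasurable]
    _ ≤ ‖h‖ₑ * ∫⁻ _ in Icc (0 : ℝ) 1,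
          ∫⁻ x in Metric.ball 0 (R + ‖h‖), ‖fderiv ℝ v x‖ₑ := by
        gcongr ‖h‖ₑ * ?_
        exact setLIntegral_mono measurable_const hslice
    _ = ‖h‖ₑ * ∫⁻ x in Metric.ball 0 (R + ‖h‖), ‖fderiv ℝ v x‖ₑ := by simp

section Translation

variable {u : E → ℝ} {v : ℕ → E → ℝ}

theorem ae_comp_add_right_eq (hv : ∀ m, ContDiff ℝ 1 (v m))
    (hvu : ∀ᵐ x, Tendsto (fun m => v m x) atTop (𝓝 (u x)))
    (hDv : ∀ R : ℝ, Tendsto (fun m => ∫⁻ x in Metric.ball 0 R, ‖fderiv ℝ (v m) x‖ₑ) atTop (𝓝 0))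
    (h : E) : ∀ᵐ x, u (x + h) = u x := by
  have hvuh : ∀ᵐ x, Tendsto (fun m => v m (x + h)) atTop (𝓝 (u (x + h))) :=
    (quasiMeasurePreserving_add_right volume h).ae hvu
  set d : ℕ → E → ℝ≥0∞ := fun m x => ‖v m (x + h) - v m x‖ₑ
  have hd (m) : Measurable (d m) := by
    have := (hv m).continuous
    exact Continuous.measurable (by fun_prop)
  have hliminf (n : ℕ) : ∫⁻ x in Metric.ball 0 n, liminf (fun m => d m x) atTop = 0 := by
    have hbound : Tendsto (fun m => ‖h‖ₑ * ∫⁻ x in Metric.ball 0 (n + ‖h‖), ‖fderiv ℝ (v m) x‖ₑ)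
        atTop (𝓝 0) := by
      simpa using ENNReal.Tendsto.const_mul (hDv (n + ‖h‖)) (.inr enorm_ne_top)
    have htendsto : Tendsto (fun m => ∫⁻ x in Metric.ball 0 (n : ℝ), d m x) atTop (𝓝 0) :=
      tendsto_of_tendsto_of_tendsto_of_le_of_le tendsto_const_nhds hbound (fun _ => zero_le)
        fun m => lintegral_ball_enorm_add_sub_le (hv m) h n
    exact le_zero_iff.mp ((lintegral_liminf_le hd).trans_eq htendsto.liminf_eq)
  have hzero : ∀ᵐ x, liminf (fun m => d m x) atTop = 0 := by
    rw [← Measure.restrict_univ (μ := volume), ← Metric.iUnion_ball_nat (0 : E),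
      ae_restrict_iUnion_iff]
    exact fun n => (lintegral_eq_zero_iff (.liminf hd)).mp (hliminf n)
  filter_upwards [hvu, hvuh, hzero] with x hx hxh hx₀
  have := (hxh.sub hx).enorm.liminf_eq.symm.trans hx₀
  exact sub_eq_zero.mp (enorm_eq_zero.mp this)

theorem exists_ae_eq_const_of_tendsto (hv : ∀ m, ContDiff ℝ 1 (v m))
    (hvu : ∀ᵐ x, Tendsto (fun m => v m x) atTop (𝓝 (u x)))
    (hDv : ∀ R : ℝ, Tendsto (fun m => ∫⁻ x in Metric.ball 0 R, ‖fderiv ℝ (v m) x‖ₑ) atTop (𝓝 0)) :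
    ∃ a, ∀ᵐ x, u x = a := by
  obtain ⟨w, hw, huw⟩ : AEMeasurable u :=
    aemeasurable_of_tendsto_metrizable_ae atTop (fun m => (hv m).continuous.aemeasurable) hvu
  have hvw : ∀ᵐ x, Tendsto (fun m => v m x) atTop (𝓝 (w x)) := by
    filter_upwards [hvu, huw] with x hx hux
    rwa [← hux]
  have hmeas : MeasurableSet {p : E × E | w (p.2 + p.1) = w p.2} :=
    measurableSet_eq_fun (by fun_prop) (by fun_prop)
  have hswap : ∀ᵐ x, ∀ᵐ h, w (x + h) = w x :=
    (Measure.ae_ae_comm hmeas).mp (.of_forall fun h => ae_comp_add_right_eq hv hvw hDv h)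
  obtain ⟨x, hx⟩ := hswap.exists
  refine ⟨w x, ?_⟩
  filter_upwards [huw, (quasiMeasurePreserving_add_left volume (-x)).ae hx] with y huy hy
  rw [huy, ← hy, add_neg_cancel_left]

end Translation

theorem isMollifier_normed (b : ContDiffBump (0 : E)) : IsMollifier (b.normed volume) where
  contDiff := b.contDiff_normed
  hasCompactSupport := b.hasCompactSupport_normed
  nonneg := b.nonneg_normed
  integral_eq_one := b.integral_normed

theorem ae_tendsto_gibbsMollify {V u : E → ℝ} {b : ℕ → ContDiffBump (0 : E)}
    (hu : LocallyIntegrable fun y => u y * exp (-V y))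
    (hb : Tendsto (fun m => (b m).rOut) atTop (𝓝 0)) (hb₂ : ∀ m, (b m).rOut ≤ 2 * (b m).rIn) :
    ∀ᵐ x, Tendsto (fun m => gibbsMollify V ((b m).normed volume) u x) atTop (𝓝 (u x)) := by
  filter_upwards [ContDiffBump.ae_convolution_tendsto_right_of_locallyIntegrable hb
    (.of_forall hb₂) hu] with x hx
  have hux : exp (V x) * (u x * exp (-V x)) = u x := by
    rw [exp_neg]
    field_simp
  have := hx.const_mul (exp (V x))
  rwa [hux] at this

theorem exists_seq_contDiffBump {X : Type*} [NormedAddCommGroup X] {ε : ℕ → ℝ}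
    (hε : ∀ m, 0 < ε m) :
    ∃ b : ℕ → ContDiffBump (0 : X), Tendsto (fun m => (b m).rOut) atTop (𝓝 0) ∧
      ∀ m, (b m).rOut ≤ ε m ∧ (b m).rOut ≤ 2 * (b m).rIn := by
  have hr (m : ℕ) : 0 < min (ε m) (1 / (m + 1)) := lt_min (hε m) Nat.one_div_pos_of_nat
  refine ⟨fun m => ⟨min (ε m) (1 / (m + 1)) / 2, min (ε m) (1 / (m + 1)), half_pos (hr m),
    half_lt_self (hr m)⟩, ?_, fun m => ⟨min_le_left _ _, (mul_div_cancel₀ _ two_ne_zero).ge⟩⟩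
  exact squeeze_zero (fun m => (hr m).le) (fun m => min_le_right _ _)
    tendsto_one_div_add_atTop_nhds_zero_nat

theorem setLIntegral_enorm_fderiv_le {v : E → ℝ} {s K : Set E} (hv : ContDiff ℝ 1 v)
    (hK : IsCompact K) (hsK : s ⊆ K) :
    ∫⁻ x in s, ‖fderiv ℝ v x‖ₑ ≤ ENNReal.ofReal (∫ x in K, ‖∇ v x‖) := by
  have hint : IntegrableOn (fun x => ‖∇ v x‖) K :=
    (continuous_gradient hv).norm.continuousOn.integrableOn_compact hK
  rw [ofReal_integral_eq_lintegral_ofReal hint (.of_forall fun x => norm_nonneg _)]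
  simp only [norm_gradient_eq_norm_fderiv, ofReal_norm]
  exact lintegral_mono_set hsK

theorem exists_ae_eq_const_of_integral_mul_generator_eq_zero {V u : E → ℝ} (hV : ContDiff ℝ 1 V)
    (hV_int : Integrable fun x => exp (-V x)) (hu : MemLp u 2 (gibbsMeasure V))
    (hLu : ∀ φ : E → ℝ, ContDiff ℝ ∞ φ → HasCompactSupport φ →
      ∫ x, u x * generator V φ x ∂gibbsMeasure V = 0) :
    ∃ a, ∀ᵐ x, u x = a := by
  have : IsProbabilityMeasure (gibbsMeasure V) := isProbabilityMeasure_tilted hV_int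
  have hu₁ : LocallyIntegrable fun y => u y * exp (-V y) :=
    ((integrable_gibbsMeasure_iff hV_int).mp (hu.integrable one_le_two)).locallyIntegrable
  have hu₂ : Integrable fun y => u y ^ 2 * exp (-V y) :=
    (integrable_gibbsMeasure_iff hV_int).mp hu.integrable_sq
  have hLu' (φ : E → ℝ) (hφ : ContDiff ℝ ∞ φ) (hφc : HasCompactSupport φ) :
      ∫ y, u y * exp (-V y) * generator V φ y = 0 := by
    have h := hLu φ hφ hφc
    rw [integral_gibbsMeasure, mul_eq_zero, inv_eq_zero,
      or_iff_right (integral_exp_pos hV_int).ne'] at h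
    simpa only [mul_right_comm] using h
  choose ε hε hgrad using fun m : ℕ => exists_setIntegral_norm_gradient_gibbsMollify_le hV hV_int
    hu₁ hu₂ hLu' (isCompact_closedBall 0 (m : ℝ)) (Nat.one_div_pos_of_nat (n := m))
  obtain ⟨b, hb, hb'⟩ := exists_seq_contDiffBump (X := E) hε
  have hv (m) : ContDiff ℝ 1 (gibbsMollify V ((b m).normed volume) u) :=
    contDiff_gibbsMollify hV hu₁ (b m).contDiff_normed (b m).hasCompactSupport_normed
  refine exists_ae_eq_const_of_tendsto hv (ae_tendsto_gibbsMollify hu₁ hb fun m => (hb' m).2)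
    fun R => ?_
  have hlim : Tendsto (fun m : ℕ => ENNReal.ofReal (1 / (m + 1))) atTop (𝓝 0) := by
    simpa using ENNReal.tendsto_ofReal (tendsto_one_div_add_atTop_nhds_zero_nat (𝕜 := ℝ))
  refine tendsto_of_tendsto_of_tendsto_of_le_of_le' tendsto_const_nhds hlim
    (.of_forall fun _ => zero_le) ?_
  filter_upwards [eventually_ge_atTop ⌈R⌉₊] with m hm
  have hball : Metric.ball (0 : E) R ⊆ Metric.closedBall 0 m :=
    (Metric.ball_subset_ball (Nat.ceil_le.mp hm)).trans Metric.ball_subset_closedBall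
  have hsupp : support ((b m).normed volume) ⊆ Metric.ball 0 (ε m) :=
    (b m).support_normed_eq.trans_subset (Metric.ball_subset_ball (hb' m).1)
  exact (setLIntegral_enorm_fderiv_le (hv m) (isCompact_closedBall 0 _) hball).trans
    (ENNReal.ofReal_le_ofReal (hgrad m _ (isMollifier_normed _) hsupp))

/-! ### Poincaré inequality -/

section LpInner

variable {X F : Type*} [MeasurableSpace X] [NormedAddCommGroup F] [InnerProductSpace ℝ F]
  {μ : Measure X} {f g : X → F}

theorem inner_toLp_toLp (hf : MemLp f 2 μ) (hg : MemLp g 2 μ) :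
    ⟪hf.toLp f, hg.toLp g⟫ = ∫ x, ⟪f x, g x⟫ ∂μ := by
  rw [L2.inner_def]
  refine integral_congr_ae ?_
  filter_upwards [hf.coeFn_toLp, hg.coeFn_toLp] with x hfx hgx
  rw [hfx, hgx]

theorem norm_toLp_sq (hf : MemLp f 2 μ) : ‖hf.toLp f‖ ^ 2 = ∫ x, ‖f x‖ ^ 2 ∂μ := by
  simp only [← real_inner_self_eq_norm_sq, inner_toLp_toLp hf hf]

theorem sq_integral_inner_le (hf : MemLp f 2 μ) (hg : MemLp g 2 μ) :
    (∫ x, ⟪f x, g x⟫ ∂μ) ^ 2 ≤ (∫ x, ‖f x‖ ^ 2 ∂μ) * ∫ x, ‖g x‖ ^ 2 ∂μ := by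
  rw [← inner_toLp_toLp hf hg, ← norm_toLp_sq hf, ← norm_toLp_sq hg, ← mul_pow]
  exact sq_le_sq.mpr ((abs_real_inner_le_norm _ _).trans (le_abs_self _))

end LpInner

theorem norm_le_of_mem_closure_of_forall_inner_le {F : Type*} [NormedAddCommGroup F]
    [InnerProductSpace ℝ F] {s : Set F} {v : F} {C : ℝ} (hC : 0 ≤ C) (hv : v ∈ closure s)
    (hs : ∀ w ∈ s, ⟪v, w⟫ ≤ C * ‖w‖) : ‖v‖ ≤ C := by
  have hclosed : IsClosed {w | ⟪v, w⟫ ≤ C * ‖w‖} := isClosed_le (by fun_prop) (by fun_prop)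
  have hvv : ⟪v, v⟫ ≤ C * ‖v‖ := closure_minimal hs hclosed hv
  rw [real_inner_self_eq_norm_mul_norm] at hvv
  exact le_of_not_gt fun h => hvv.not_gt (mul_lt_mul_of_pos_right h (hC.trans_lt h))

theorem memLp_generator {V φ : E → ℝ} (hV : ContDiff ℝ 1 V) (hφ : ContDiff ℝ 2 φ)
    (hφc : HasCompactSupport φ) : MemLp (generator V φ) 2 (gibbsMeasure V) :=
  (continuous_generator hV hφ).memLp_of_hasCompactSupport (hasCompactSupport_generator hφ hφc)

/-- The image of `C_c^∞` under the generator, as a subspace of `L²(e^{-V})`. -/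
noncomputable def generatorRange (V : E → ℝ) : Submodule ℝ (Lp ℝ 2 (gibbsMeasure V)) where
  carrier := {v | ∃ φ, ContDiff ℝ ∞ φ ∧ HasCompactSupport φ ∧ v =ᵐ[gibbsMeasure V] generator V φ}
  zero_mem' := by
    have hzero : generator V 0 = 0 := by
      simpa using generator_smul (V := V) (φ := 0) 0 contDiff_const
    exact ⟨0, contDiff_const, HasCompactSupport.zero, by rw [hzero]; exact Lp.coeFn_zero _ _ _⟩
  add_mem' := by
    rintro v w ⟨φ, hφ, hφc, hv⟩ ⟨ψ, hψ, hψc, hw⟩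
    refine ⟨φ + ψ, hφ.add hψ, hφc.add hψc, ?_⟩
    rw [generator_add (contDiff_infty.mp hφ 2) (contDiff_infty.mp hψ 2)]
    exact (Lp.coeFn_add v w).trans (hv.add hw)
  smul_mem' := by
    rintro r v ⟨φ, hφ, hφc, hv⟩
    refine ⟨r • φ, hφ.const_smul r, hφc.smul_left (f := fun _ => r), ?_⟩
    rw [generator_smul r (contDiff_infty.mp hφ 2)]
    exact (Lp.coeFn_smul r v).trans (hv.const_smul r)

/- By the Liouville property, everything orthogonal to the range of the generator is constant. -/
theorem toLp_mem_topologicalClosure_generatorRange {V f : E → ℝ} (hV : ContDiff ℝ 1 V)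
    (hV_int : Integrable fun x => exp (-V x)) (hf : MemLp f 2 (gibbsMeasure V))
    (hf₀ : ∫ x, f x ∂gibbsMeasure V = 0) :
    hf.toLp f ∈ (generatorRange V).topologicalClosure := by
  rw [← Submodule.orthogonal_orthogonal_eq_closure, Submodule.mem_orthogonal]
  intro u hu
  obtain ⟨a, ha⟩ :=
      exists_ae_eq_const_of_integral_mul_generator_eq_zero hV hV_int (Lp.memLp u) <| by
    intro φ hφ hφc
    have hLφ := memLp_generator hV (contDiff_infty.mp hφ 2) hφc
    rw [← Submodule.inner_left_of_mem_orthogonal (K := generatorRange V)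
      ⟨φ, hφ, hφc, hLφ.coeFn_toLp⟩ hu, L2.inner_def]
    refine integral_congr_ae ?_
    filter_upwards [hLφ.coeFn_toLp] with x hx
    simp [hx, mul_comm]
  have huf : (fun x => ⟪u x, hf.toLp f x⟫) =ᵐ[gibbsMeasure V] fun x => a * f x := by
    filter_upwards [hf.coeFn_toLp, (tilted_absolutelyContinuous _ _).ae_le ha] with x hx hux
    simp [hx, hux, mul_comm]
  rw [L2.inner_def, integral_congr_ae huf, integral_const_mul, hf₀, mul_zero]

theorem sq_integral_mul_generator_le {V g φ : E → ℝ} {κ : ℝ} (hV : ContDiff ℝ 1 V)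
    (hg : ContDiff ℝ 1 g) (hgc : HasCompactSupport g) (hφ : ContDiff ℝ 2 φ)
    (hφc : HasCompactSupport φ) (hκ : 0 < κ)
    (hgap : κ * ∫ x, ‖∇ φ x‖ ^ 2 ∂gibbsMeasure V ≤ ∫ x, generator V φ x ^ 2 ∂gibbsMeasure V)
    (a : ℝ) :
    (∫ x, (g x - a) * generator V φ x ∂gibbsMeasure V) ^ 2 ≤
      1 / κ * (∫ x, ‖∇ g x‖ ^ 2 ∂gibbsMeasure V) * ∫ x, generator V φ x ^ 2 ∂gibbsMeasure V := by
  have hmemLp {f : E → ℝ} (hf : ContDiff ℝ 1 f) (hfc : HasCompactSupport f) :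
      MemLp (∇ f) 2 (gibbsMeasure V) :=
    (continuous_gradient hf).memLp_of_hasCompactSupport (hasCompactSupport_gradient hfc)
  have hgrad : ∇ (fun x => g x - a) = ∇ g := by
    ext1 x
    rw [gradient, fderiv_sub_const, gradient]
  rw [integral_mul_generator (f := fun x => g x - a) hV (hg.sub contDiff_const) hφ hφc, neg_sq,
    hgrad]
  calc (∫ x, ⟪∇ g x, ∇ φ x⟫ ∂gibbsMeasure V) ^ 2
      ≤ (∫ x, ‖∇ g x‖ ^ 2 ∂gibbsMeasure V) * ∫ x, ‖∇ φ x‖ ^ 2 ∂gibbsMeasure V :=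
        sq_integral_inner_le (hmemLp hg hgc) (hmemLp (hφ.of_le (by norm_num)) hφc)
    _ ≤ (∫ x, ‖∇ g x‖ ^ 2 ∂gibbsMeasure V) *
          ((∫ x, generator V φ x ^ 2 ∂gibbsMeasure V) / κ) := by
        gcongr
        rwa [le_div_iff₀' hκ]
    _ = _ := by ring

theorem variance_le_of_forall_le_integral_generator_sq {V g : E → ℝ} {κ : ℝ}
    (hV : ContDiff ℝ 1 V) (hV_int : Integrable fun x => exp (-V x)) (hκ : 0 < κ)
    (hgap : ∀ φ, ContDiff ℝ ∞ φ → HasCompactSupport φ →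
      κ * ∫ x, ‖∇ φ x‖ ^ 2 ∂gibbsMeasure V ≤ ∫ x, generator V φ x ^ 2 ∂gibbsMeasure V)
    (hg : ContDiff ℝ 1 g) (hgc : HasCompactSupport g) :
    Var[g; gibbsMeasure V] ≤ 1 / κ * ∫ x, ‖∇ g x‖ ^ 2 ∂gibbsMeasure V := by
  have : IsProbabilityMeasure (gibbsMeasure V) := isProbabilityMeasure_tilted hV_int
  set m := ∫ x, g x ∂gibbsMeasure V with hm
  set D := 1 / κ * ∫ x, ‖∇ g x‖ ^ 2 ∂gibbsMeasure V
  have hD₀ : 0 ≤ D := by positivity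
  have hg₂ : MemLp g 2 (gibbsMeasure V) := hg.continuous.memLp_of_hasCompactSupport hgc
  have hgm : MemLp (fun x => g x - m) 2 (gibbsMeasure V) := hg₂.sub (memLp_const m)
  have hgm₀ : ∫ x, (g x - m) ∂gibbsMeasure V = 0 := by
    rw [integral_sub (hg₂.integrable one_le_two) (integrable_const m), ← hm]
    simp
  have hnorm : ‖hgm.toLp‖ ≤ √D := by
    refine norm_le_of_mem_closure_of_forall_inner_le (sqrt_nonneg D)
      (toLp_mem_topologicalClosure_generatorRange hV hV_int hgm hgm₀) ?_
    rintro v ⟨φ, hφ, hφc, hv⟩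
    have hφ₂ : ContDiff ℝ 2 φ := contDiff_infty.mp hφ 2
    have hLφ := memLp_generator hV hφ₂ hφc
    obtain rfl : v = hLφ.toLp := Lp.ext (hv.trans hLφ.coeFn_toLp.symm)
    have hsq := sq_integral_mul_generator_le hV hg hgc hφ₂ hφc hκ (hgap φ hφ hφc) m
    refine le_of_abs_le (abs_le_of_sq_le_sq ?_ (by positivity))
    rw [mul_pow, sq_sqrt hD₀, norm_toLp_sq, inner_toLp_toLp]
    simpa only [Real.norm_eq_abs, sq_abs, RCLike.inner_apply', conj_trivial] using hsq
  calc Var[g; gibbsMeasure V] = ‖hgm.toLp‖ ^ 2 := by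
        rw [ProbabilityTheory.variance_eq_integral hg₂.aemeasurable, norm_toLp_sq]
        simp only [Real.norm_eq_abs, sq_abs, ← hm]
    _ ≤ D := (le_sqrt (norm_nonneg _) hD₀).mp hnorm

theorem stmt_2_general {V ρ : E → ℝ} {α : ℝ≥0∞ → ℝ≥0∞} {c : E → E → ℝ≥0∞}
    (hV : ContDiff ℝ 2 V) (hV_int : Integrable fun x => exp (-V x))
    (hρV : ∀ x u, ρ x * ‖u‖ ^ 2 ≤ iteratedFDeriv ℝ 2 V x ![u, u])
    (hc : Measurable (uncurry c)) (hL : costLipNorm c ρ ≠ ⊤) (hα : 0 < α ⊤)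
    (h : TransportInformationInequality α c (gibbsMeasure V))
    (hA : legendreTransform α (costLipNorm c ρ) < ENNReal.ofReal (∫ x, ρ x ∂gibbsMeasure V))
    {g : E → ℝ} (hg : ContDiff ℝ 1 g) (hgc : HasCompactSupport g) :
    Var[g; gibbsMeasure V] ≤
      1 / (∫ x, ρ x ∂gibbsMeasure V - (legendreTransform α (costLipNorm c ρ)).toReal) *
        ∫ x, ‖∇ g x‖ ^ 2 ∂gibbsMeasure V := by
  have : IsProbabilityMeasure (gibbsMeasure V) := isProbabilityMeasure_tilted hV_int
  have hρ_pos : 0 < ∫ x, ρ x ∂gibbsMeasure V := ENNReal.ofReal_pos.mp (pos_of_gt hA)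
  have hκ := sub_pos.mpr ((ENNReal.lt_ofReal_iff_toReal_lt hA.ne_top).mp hA)
  refine variance_le_of_forall_le_integral_generator_sq (hV.of_le one_le_two) hV_int hκ ?_ hg hgc
  intro φ hφ hφc
  exact le_integral_generator_sq hV hρV h hα hc hL hA.ne_top
    (not_imp_comm.mp integral_undef hρ_pos.ne') (contDiff_infty.mp hφ 3) hφc

/-- Poincaré inequality with constant `1/(m - α*(2L)/2)` from a
transport-information inequality, via the Legendre transform of `α`. -/
theorem stmt_2 {n : ℕ} (V ρ : EuclideanSpace ℝ (Fin n) → ℝ)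
    (hV : ContDiff ℝ 2 V) (hVint : Integrable (fun x => Real.exp (-V x)))
    (μ : Measure (EuclideanSpace ℝ (Fin n)))
    (hμ : μ = volume.withDensity
      (fun x => ENNReal.ofReal (Real.exp (-V x) / ∫ y, Real.exp (-V y))))
    (hρcont : Continuous ρ)
    (hHess : ∀ x u, ρ x * ‖u‖ ^ 2 ≤ iteratedFDeriv ℝ 2 V x ![u, u])
    (ρ₀ : ℝ) (hρ₀ : ∀ x, ρ₀ ≤ ρ x)
    (m : ℝ) (hm : m = ∫ x, ρ x ∂μ) (hmpos : 0 < m)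
    (c : EuclideanSpace ℝ (Fin n) → EuclideanSpace ℝ (Fin n) → ℝ≥0∞)
    (hclsc : LowerSemicontinuous
      (fun p : EuclideanSpace ℝ (Fin n) × EuclideanSpace ℝ (Fin n) => c p.1 p.2))
    (hcsymm : ∀ x y, c x y = c y x) (hcdiag : ∀ x, c x x = 0)
    (L : ℝ≥0∞) (hLdef : L = costLipNorm c ρ) (hLfin : L ≠ ⊤)
    (α : ℝ≥0∞ → ℝ≥0∞) (hαcont : Continuous α) (hαmono : StrictMono α)
    (hα0 : α 0 = 0) (hαfin : ∀ s, s ≠ ⊤ → α s ≠ ⊤)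
    (hWI : ∀ f : EuclideanSpace ℝ (Fin n) → ℝ, (∀ x, 0 < f x) → ContDiff ℝ 1 f →
      IsProbabilityMeasure (μ.withDensity fun x => ENNReal.ofReal (f x)) →
      α (transportCost c (μ.withDensity fun x => ENNReal.ofReal (f x)) μ) ≤
        ∫⁻ x, ENNReal.ofReal (‖gradient (fun y => Real.sqrt (f y)) x‖ ^ 2) ∂μ)
    (A : ℝ≥0∞) (hAdef : A = ⨆ r : ℝ≥0∞, r * (2 * L) - α r)
    (hcond : A / 2 < ENNReal.ofReal m) :
    ∀ g : EuclideanSpace ℝ (Fin n) → ℝ, ContDiff ℝ (⊤ : ℕ∞) g → HasCompactSupport g →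
      ∫ x, g x ^ 2 ∂μ - (∫ x, g x ∂μ) ^ 2 ≤
        (1 / (m - A.toReal / 2)) * ∫ x, ‖gradient g x‖ ^ 2 ∂μ := by
  intro g hg hgc
  obtain rfl : μ = gibbsMeasure V := hμ
  subst hm hLdef
  have : IsProbabilityMeasure (gibbsMeasure V) := isProbabilityMeasure_tilted hVint
  have hA : legendreTransform α (costLipNorm c ρ) ≤ A / 2 := hAdef ▸ legendreTransform_le_half α _
  have hA' : (legendreTransform α (costLipNorm c ρ)).toReal ≤ A.toReal / 2 := by
    simpa using ENNReal.toReal_mono hcond.ne_top hA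
  have hκ : 0 < ∫ x, ρ x ∂gibbsMeasure V - A.toReal / 2 := by
    simpa using (ENNReal.lt_ofReal_iff_toReal_lt hcond.ne_top).mp hcond
  have hPoincaré := stmt_2_general hV hVint hHess hclsc.measurable hLfin
    (hα0 ▸ hαmono ENNReal.zero_lt_top) hWI (hA.trans_lt hcond) (hg.of_le (by simp)) hgc
  rw [ProbabilityTheory.variance_eq_sub (hg.continuous.memLp_of_hasCompactSupport hgc)]
    at hPoincaré
  refine hPoincaré.trans ?_
  gcongr
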